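/- Let m be a positive half-odd integer (2m an odd positive integer). For τ in the upper half-plane and z1, z2 ∈ ℂ such that neither 2z1 nor 2z2 lies in ℤ + ℤ·(2τ), the following identity holds: θ^{(−)}_{−2m,2m+1}(τ, 2m(z1−z2)/(2m+1)) · Φ^{[m,0]}(2τ, 2z1, 2z2, 0) = −i η(2τ)³ { θ^{(−)}_{2m,2m+1}(τ, (z1−z2)/(2m+1) + z1+z2) / ϑ_{11}(2τ, 2z1) + θ^{(−)}_{2m,2m+1}(τ, (z1−z2)/(2m+1) − z1−z2) / ϑ_{11}(2τ, 2z2) } − q^{−m/(2(2m+1))} e^{2πim(z1−z2)/(2m+1)} Σ_{j=1}^∞ Σ_{r=1}^{j} Σ_{k even, 0≤k≤2m−1} (−1)^j q^{(2m+1)j² − (4m(j−r)+2m−k)²/(8m)} { e^{πi(4mr−2m+k)(z1−z2)} q^{−(4mr−2m+k)/2} + e^{−πi(4mr−2m+k)(z1−z2)} q^{(4mr−2m+k)/2} } [θ_{k,2m} − θ_{−k,2m}](τ, z1+z2) + q^{−m/(2(2m+1))} e^{2πim(z1−z2)/(2m+1)} Σ_{j=1}^∞ Σ_{r=0}^{j−1}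 Σ_{k even, 0≤k≤2m−1} (−1)^j q^{(2m+1)j² − (4m(j−r)−2m+k)²/(8m)} { e^{πi(4mr+2m−k)(z1−z2)} q^{−(4mr+2m−k)/2} + e^{−πi(4mr+2m−k)(z1−z2)} q^{(4mr+2m−k)/2} } [θ_{k,2m} − θ_{−k,2m}](τ, z1+z2) + θ^{(−)}_{−2m,2m+1}(τ, 2m(z1−z2)/(2m+1)) · Σ_{k=1}^{m−1/2} e^{2πik(z1−z2)} q^{−k²/(2m)} [θ_{k,m} − θ_{−k,m}](2τ, 2z1+2z2), where in the last sum k runs over the integers 1, …, m−1/2. -/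

import Mathlib

open Complex

noncomputable section

namespace Wakimoto

/-- `qpow τ x = e^{2πiτx}`, i.e. `q^x` where `q = e^{2πiτ}`. -/
def qpow (τ x : ℂ) : ℂ := Complex.exp (2 * Real.pi * Complex.I * τ * x)

/-- `e2 z = e^{2πiz}`. -/
def e2 (z : ℂ) : ℂ := Complex.exp (2 * Real.pi * Complex.I * z)

/-- The mock theta function `Φ^{[m,s]}_1`. -/
def Phi1 (m s : ℂ) (τ z1 z2 t : ℂ) : ℂ :=
  Complex.exp (-(2 * Real.pi * Complex.I) * m * t) *
    ∑' j : ℤ,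
      Complex.exp (2 * Real.pi * Complex.I * (m * (j : ℂ) * (z1 + z2) + s * z1)) *
          qpow τ (m * (j : ℂ) ^ 2 + s * (j : ℂ)) /
        (1 - e2 z1 * qpow τ (j : ℂ))

/-- The mock theta function `Φ^{[m,s]}_2`. -/
def Phi2 (m s : ℂ) (τ z1 z2 t : ℂ) : ℂ :=
  Complex.exp (-(2 * Real.pi * Complex.I) * m * t) *
    ∑' j : ℤ,
      Complex.exp (-(2 * Real.pi * Complex.I) * (m * (j : ℂ) * (z1 + z2) + s * z2)) *
          qpow τ (m * (j : ℂ) ^ 2 + s * (j : ℂ)) /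
        (1 - e2 (-z2) * qpow τ (j : ℂ))

/-- `Φ^{[m,s]} = Φ^{[m,s]}_1 - Φ^{[m,s]}_2`. -/
def Phi (m s : ℂ) (τ z1 z2 t : ℂ) : ℂ :=
  Phi1 m s τ z1 z2 t - Phi2 m s τ z1 z2 t

/-- Jacobi's theta function `θ_{k,m}`. -/
def jTheta (k m : ℂ) (τ z : ℂ) : ℂ :=
  ∑' j : ℤ,
    Complex.exp (2 * Real.pi * Complex.I * (m * ((j : ℂ) + k / (2 * m)) * z)) *
      qpow τ (m * ((j : ℂ) + k / (2 * m)) ^ 2)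

/-- The signed theta function `θ^{(-)}_{k,m}`. -/
def jThetaM (k m : ℂ) (τ z : ℂ) : ℂ :=
  ∑' j : ℤ,
    (-1 : ℂ) ^ j *
      Complex.exp (2 * Real.pi * Complex.I * (m * ((j : ℂ) + k / (2 * m)) * z)) *
      qpow τ (m * ((j : ℂ) + k / (2 * m)) ^ 2)

/-- The Dedekind eta function. -/
def eta (τ : ℂ) : ℂ := qpow τ (1 / 24) * ∏' n : ℕ, (1 - qpow τ ((n : ℂ) + 1))

/-- The Mumford theta functions `ϑ_{ab}`. -/
def mumford (a b : ℕ) (τ z : ℂ) : ℂ :=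
  ∑' n : ℤ,
    Complex.exp (Real.pi * Complex.I * τ * ((n : ℂ) + (a : ℂ) / 2) ^ 2 +
      2 * Real.pi * Complex.I * ((n : ℂ) + (a : ℂ) / 2) * (z + (b : ℂ) / 2))

/-- `z` lies in the lattice `ℤ + ℤτ`. -/
def InLattice (τ z : ℂ) : Prop := ∃ a b : ℤ, z = (a : ℂ) + (b : ℂ) * τ

/-!
Put `a = z1 + z2`, `b = z1 - z2` and `N = 2m = 2n + 1`. The identity comes from evaluating a triple
series over `(r, l, s)`, supported on a cone where its indefinite quadratic form is positive, in
two ways.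

Summing over `s` first gives truncated geometric series. Their two ends yield a signed theta
function times an Appell–Lerch sum, and a signed theta function times the Appell series
`∑ (-1) ^ k q ^ (k² + k) / (1 - x q ^ 2k)`. The latter is `(q²; q²)_∞ ^ 3` divided by a theta
series in `x`, as one sees by letting a finite partial fraction expansion tend to a limit; this is
the origin of `η ^ 3 / ϑ₁₁`.

Summing over `r` and `l` first gives the theta functions of the cosets `s + N ℤ` times half-sums of
an indefinite theta series whose full sums vanish by antisymmetry. Subtracting the same evaluation
at `-a` turns the left-hand side into `Phi` and makes the coset theta functions odd in `s`, so that
the residues `s ≡ ±κ` modulo `N` pair up. Over each pair the half-sums split into the diagonal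
`l = r`, which is again a signed theta function, and two quadrants, which are the correction terms.
-/

section FiniteIdentities

/-- The `q`-Pochhammer symbol `(a; p)_n`. -/
def qPochhammer {R : Type*} [CommRing R] (a p : R) (n : ℕ) : R :=
  ∏ i ∈ Finset.range n, (1 - a * p ^ i)

/-- The Gaussian binomial coefficient `[n, k]` with base `p`, defined through the Pascal rule so
that it makes sense in every commutative ring. -/
def gaussBinom {R : Type*} [CommRing R] (p : R) : ℕ → ℕ → R
  | _, 0 => 1
  | 0, _ + 1 => 0
  | n + 1, k + 1 => gaussBinom p n k + p ^ (k + 1) * gaussBinom p n (k + 1)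

section CommRing

variable {R : Type*} [CommRing R] (a p : R) (n k : ℕ)

lemma qPochhammer_succ : qPochhammer a p (n + 1) = qPochhammer a p n * (1 - a * p ^ n) :=
  Finset.prod_range_succ ..

lemma qPochhammer_succ' : qPochhammer a p (n + 1) = (1 - a) * qPochhammer (a * p) p n := by
  simp only [qPochhammer, Finset.prod_range_succ', pow_zero, mul_one, pow_succ', mul_assoc]
  ring

@[simp]
lemma gaussBinom_zero_right : gaussBinom p n 0 = 1 := by cases n <;> rfl

lemma gaussBinom_succ_succ :
    gaussBinom p (n + 1) (k + 1) = gaussBinom p n k + p ^ (k + 1) * gaussBinom p n (k + 1) :=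
  rfl

variable {n k} in
lemma gaussBinom_eq_zero_of_lt (h : n < k) : gaussBinom p n k = 0 := by
  induction n generalizing k with
  | zero =>
    obtain ⟨k, rfl⟩ := Nat.exists_eq_succ_of_ne_zero h.ne'
    rfl
  | succ n ih =>
    obtain ⟨k, rfl⟩ := Nat.exists_eq_succ_of_ne_zero (Nat.ne_zero_of_lt h)
    rw [gaussBinom_succ_succ, ih (by lia), ih (by lia), mul_zero, add_zero]

variable {n k} in
lemma gaussBinom_succ_succ' (h : k ≤ n) :
    gaussBinom p (n + 1) (k + 1) = gaussBinom p n (k + 1) + p ^ (n - k) * gaussBinom p n k := by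
  induction n generalizing k with
  | zero =>
    obtain rfl : k = 0 := by lia
    simp [gaussBinom]
  | succ n ih =>
    obtain rfl | h := h.eq_or_lt
    · simp [gaussBinom_succ_succ p (n + 1), gaussBinom_eq_zero_of_lt]
    obtain ⟨d, rfl⟩ := Nat.exists_eq_add_of_le (Nat.le_of_lt_succ h)
    obtain _ | k := k
    · have hstep := ih (k := 0) (by lia)
      simp only [gaussBinom_zero_right, gaussBinom_succ_succ, Nat.sub_zero] at hstep ⊢
      linear_combination p * hstep
    · have h₁ := ih (k := k) (by lia)
      have h₂ := ih (k := k + 1) (by lia)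
      rw [show k + 1 + d - k = d + 1 by lia] at h₁
      rw [show k + 1 + d - (k + 1) = d by lia] at h₂
      rw [gaussBinom_succ_succ p (k + 1 + d + 1), show k + 1 + d + 1 - (k + 1) = d + 1 by lia,
        gaussBinom_succ_succ p (k + 1 + d) (k + 1), gaussBinom_succ_succ p (k + 1 + d) k]
      rw [gaussBinom_succ_succ] at h₁ h₂
      linear_combination h₁ + p ^ (k + 2) * h₂

lemma gaussBinom_add_mul_qPochhammer (a b : ℕ) :
    gaussBinom p (a + b) a * (qPochhammer p p a * qPochhammer p p b) =
      qPochhammer p p (a + b) := by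
  induction h : a + b generalizing a b with
  | zero =>
    obtain ⟨rfl, rfl⟩ : a = 0 ∧ b = 0 := by lia
    simp [qPochhammer]
  | succ n ih =>
    obtain _ | a := a
    · obtain rfl : b = n + 1 := by lia
      simp [qPochhammer]
    obtain _ | b := b
    · obtain rfl : a = n := by lia
      have hdiag := ih a 0 (by lia)
      rw [gaussBinom_succ_succ, gaussBinom_eq_zero_of_lt p a.lt_succ_self, qPochhammer_succ]
      linear_combination (1 - p * p ^ a) * hdiag
    · obtain rfl : n = a + b + 1 := by lia
      have h₁ := ih a (b + 1) (by lia)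
      have h₂ := ih (a + 1) b (by lia)
      rw [qPochhammer_succ p p b] at h₁ ⊢
      rw [qPochhammer_succ p p a] at h₂ ⊢
      rw [gaussBinom_succ_succ, qPochhammer_succ p p (a + b + 1)]
      linear_combination (1 - p * p ^ a) * h₁ + p ^ (a + 1) * (1 - p * p ^ b) * h₂

variable (F : ℕ → R)

lemma sum_gaussBinom_succ :
    ∑ j ∈ Finset.range (n + 2), gaussBinom p (n + 1) j * F j =
      ∑ j ∈ Finset.range (n + 1), gaussBinom p n j * (F (j + 1) + p ^ j * F j) := by
  have hshift : ∑ j ∈ Finset.range (n + 1), gaussBinom p n j * (p ^ j * F j) =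
      ∑ j ∈ Finset.range (n + 1), gaussBinom p n (j + 1) * (p ^ (j + 1) * F (j + 1)) + F 0 := by
    have h := Finset.sum_range_succ' (fun j ↦ gaussBinom p n j * (p ^ j * F j)) (n + 1)
    rw [Finset.sum_range_succ, gaussBinom_eq_zero_of_lt p n.lt_succ_self] at h
    simpa using h
  simp only [Finset.sum_range_succ' _ (n + 1), gaussBinom_succ_succ, mul_add,
    Finset.sum_add_distrib, hshift, gaussBinom_zero_right, one_mul, add_mul, ← add_assoc]
  simp only [mul_assoc, mul_left_comm]

lemma sum_gaussBinom_succ' :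
    ∑ j ∈ Finset.range (n + 2), gaussBinom p (n + 1) j * F j =
      ∑ j ∈ Finset.range (n + 1), gaussBinom p n j * (F j + p ^ (n - j) * F (j + 1)) := by
  have hshift : ∑ j ∈ Finset.range (n + 1), gaussBinom p n j * F j =
      ∑ j ∈ Finset.range (n + 1), gaussBinom p n (j + 1) * F (j + 1) + F 0 := by
    have h := Finset.sum_range_succ' (fun j ↦ gaussBinom p n j * F j) (n + 1)
    rw [Finset.sum_range_succ, gaussBinom_eq_zero_of_lt p n.lt_succ_self] at h
    simpa using h
  simp only [mul_add, Finset.sum_add_distrib, hshift, Finset.sum_range_succ' _ (n + 1),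
    gaussBinom_zero_right, one_mul]
  rw [add_right_comm, ← Finset.sum_add_distrib]
  congr 1
  refine Finset.sum_congr rfl fun j hj ↦ ?_
  rw [gaussBinom_succ_succ' p (Nat.lt_succ_iff.1 (Finset.mem_range.1 hj))]
  ring

end CommRing

section Field

variable {K : Type*} [Field K] {q : K}

lemma sum_gaussBinom_mul_pow (hq : q ≠ 0) (n : ℕ) (y : K) :
    ∑ j ∈ Finset.range (n + 1), gaussBinom (q ^ 2) n j * (q ^ ((j : ℤ) ^ 2 - j) * (-y) ^ j) =
      qPochhammer y (q ^ 2) n := by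
  induction n generalizing y with
  | zero => simp [qPochhammer]
  | succ n ih =>
    rw [sum_gaussBinom_succ, qPochhammer_succ', ← ih, Finset.mul_sum]
    refine Finset.sum_congr rfl fun j _ ↦ ?_
    have hexp : q ^ (((j + 1 : ℕ) : ℤ) ^ 2 - (j + 1 : ℕ)) =
        q ^ ((j : ℤ) ^ 2 - j) * (q ^ 2) ^ j := by
      rw [← pow_mul, ← zpow_natCast, ← zpow_add₀ hq]
      congr 1
      push_cast
      ring
    rw [hexp]
    ring

/-- The partial fraction expansion of `(q ^ 2; q ^ 2)_n y ^ c / (y; q ^ 2)_{n + 1}` for `c ≤ n`, of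
which Appell series are limits. -/
def partialFractionSum (q : K) (n c : ℕ) (y : K) : K :=
  ∑ j ∈ Finset.range (n + 1), gaussBinom (q ^ 2) n j *
    ((-1) ^ j * q ^ ((j : ℤ) ^ 2 + j - 2 * j * c) / (1 - y * (q ^ 2) ^ j))

lemma partialFractionSum_succ_zero (hq : q ≠ 0) (n : ℕ) (y : K) :
    partialFractionSum q (n + 1) 0 y =
      partialFractionSum q n 0 y - (q ^ 2) ^ (n + 1) * partialFractionSum q n 0 (y * q ^ 2) := by
  rw [partialFractionSum, sum_gaussBinom_succ', partialFractionSum, partialFractionSum,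
    Finset.mul_sum, ← Finset.sum_sub_distrib]
  refine Finset.sum_congr rfl fun j hj ↦ ?_
  have hexp : (q ^ 2) ^ (n - j) *
        q ^ (((j + 1 : ℕ) : ℤ) ^ 2 + (j + 1 : ℕ) - 2 * (j + 1 : ℕ) * (0 : ℕ)) =
      (q ^ 2) ^ (n + 1) * q ^ ((j : ℤ) ^ 2 + j - 2 * j * (0 : ℕ)) := by
    simp only [← pow_mul, ← zpow_natCast q (_ * _), ← zpow_add₀ hq]
    congr 1
    push_cast [Nat.cast_sub (Nat.lt_succ_iff.1 (Finset.mem_range.1 hj))]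
    ring
  rw [pow_succ' (q ^ 2) j, mul_assoc y, mul_div_assoc, mul_div_assoc, mul_div_assoc]
  linear_combination
    -(gaussBinom (q ^ 2) n j * (-1) ^ j * (1 - y * (q ^ 2 * (q ^ 2) ^ j))⁻¹) * hexp

lemma partialFractionSum_succ_succ (hq : q ≠ 0) (n c : ℕ) (y : K) :
    partialFractionSum q (n + 1) (c + 1) y =
      partialFractionSum q n c y - ((q ^ 2) ^ c)⁻¹ * partialFractionSum q n c (y * q ^ 2) := by
  rw [partialFractionSum, sum_gaussBinom_succ, partialFractionSum, partialFractionSum,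
    Finset.mul_sum, ← Finset.sum_sub_distrib]
  refine Finset.sum_congr rfl fun j _ ↦ ?_
  have hexp : (q ^ 2) ^ j * q ^ ((j : ℤ) ^ 2 + j - 2 * j * (c + 1 : ℕ)) =
      q ^ ((j : ℤ) ^ 2 + j - 2 * j * c) := by
    rw [← pow_mul, ← zpow_natCast, ← zpow_add₀ hq]
    congr 1
    push_cast
    ring
  have hexp' : q ^ (((j + 1 : ℕ) : ℤ) ^ 2 + (j + 1 : ℕ) - 2 * (j + 1 : ℕ) * (c + 1 : ℕ)) =
      ((q ^ 2) ^ c)⁻¹ * q ^ ((j : ℤ) ^ 2 + j - 2 * j * c) := by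
    rw [← pow_mul, ← zpow_natCast, ← zpow_neg, ← zpow_add₀ hq]
    congr 1
    push_cast
    ring
  rw [hexp', ← hexp, pow_succ' (q ^ 2) j, mul_assoc y]
  ring

lemma partialFractionSum_mul_qPochhammer (hq : q ≠ 0) {n c : ℕ} (hc : c ≤ n) (y : K)
    (hy : ∀ i ≤ n, 1 - y * (q ^ 2) ^ i ≠ 0) :
    partialFractionSum q n c y * qPochhammer y (q ^ 2) (n + 1) =
      qPochhammer (q ^ 2) (q ^ 2) n * y ^ c := by
  induction n generalizing c y with
  | zero =>
    obtain rfl : c = 0 := by lia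
    have := hy 0 le_rfl
    simp_all [partialFractionSum, qPochhammer]
  | succ n ih =>
    have hy' (i : ℕ) (hi : i ≤ n) : 1 - y * q ^ 2 * (q ^ 2) ^ i ≠ 0 := by
      simpa only [pow_succ', mul_assoc] using hy (i + 1) (by lia)
    have hprod := qPochhammer_succ' y (q ^ 2) (n + 1)
    rw [qPochhammer_succ] at hprod
    rw [qPochhammer_succ y, qPochhammer_succ (q ^ 2) (q ^ 2) n]
    obtain _ | c := c
    · have h₁ := ih (Nat.zero_le n) y fun i hi ↦ hy i (by lia)
      have h₂ := ih (Nat.zero_le n) (y * q ^ 2) hy'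
      rw [partialFractionSum_succ_zero hq]
      linear_combination (1 - y * (q ^ 2) ^ (n + 1)) * h₁ - (q ^ 2) ^ (n + 1) * (1 - y) * h₂ -
        (q ^ 2) ^ (n + 1) * partialFractionSum q n 0 (y * q ^ 2) * hprod
    · have h₁ := ih (Nat.le_of_succ_le_succ hc) y fun i hi ↦ hy i (by lia)
      have h₂ := ih (Nat.le_of_succ_le_succ hc) (y * q ^ 2) hy'
      have hinv := inv_mul_cancel₀ (pow_ne_zero c (pow_ne_zero 2 hq))
      rw [partialFractionSum_succ_succ hq]
      linear_combination (1 - y * (q ^ 2) ^ (n + 1)) * h₁ - ((q ^ 2) ^ c)⁻¹ * (1 - y) * h₂ -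
        ((q ^ 2) ^ c)⁻¹ * partialFractionSum q n c (y * q ^ 2) * hprod -
        (1 - y) * qPochhammer (q ^ 2) (q ^ 2) n * y ^ c * hinv

end Field

end FiniteIdentities

section ThetaAppell

section Field

variable {K : Type*} [Field K] {q x : K}

/-- The general term of the theta series `∑ₖ (-1)ᵏ q ^ (k² - k) xᵏ`. -/
def thetaTerm (q x : K) (k : ℤ) : K := (-1) ^ k * q ^ (k ^ 2 - k) * x ^ k

/-- The general term of the Appell series `∑ₖ (-1)ᵏ q ^ (k² + k) / (1 - x q ^ 2k)`. -/
def appellTerm (q x : K) (k : ℤ) : K := (-1) ^ k * q ^ (k ^ 2 + k) / (1 - x * (q ^ 2) ^ k)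

lemma neg_one_zpow_natCast_sub (j N : ℕ) : (-1 : K) ^ ((j : ℤ) - N) = (-1) ^ j * (-1) ^ N := by
  rw [zpow_sub₀ (neg_ne_zero.2 one_ne_zero), zpow_natCast, zpow_natCast, div_eq_mul_inv,
    ← inv_pow, inv_neg_one]

lemma shift_mul_pow (hq : q ≠ 0) (x : K) (N i : ℕ) :
    x * (q ^ 2) ^ (-(N : ℤ)) * (q ^ 2) ^ i = x * (q ^ 2) ^ ((i : ℤ) - N) := by
  rw [mul_assoc, ← zpow_natCast (q ^ 2) i, ← zpow_add₀ (pow_ne_zero 2 hq), neg_add_eq_sub]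

lemma sum_gaussBinom_mul_thetaTerm (hq : q ≠ 0) (hx : x ≠ 0) (N : ℕ) :
    ∑ j ∈ Finset.range (2 * N + 1), gaussBinom (q ^ 2) (2 * N) j * thetaTerm q x ((j : ℤ) - N) =
      (-1) ^ N * x ^ (-(N : ℤ)) * q ^ ((N : ℤ) ^ 2 + N) *
        qPochhammer (x * (q ^ 2) ^ (-(N : ℤ))) (q ^ 2) (2 * N) := by
  rw [← sum_gaussBinom_mul_pow hq, Finset.mul_sum]
  refine Finset.sum_congr rfl fun j _ ↦ ?_
  have hexp : q ^ (((j : ℤ) - N) ^ 2 - ((j : ℤ) - N)) =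
      q ^ ((N : ℤ) ^ 2 + N) * q ^ ((j : ℤ) ^ 2 - j) * ((q ^ 2) ^ (-(N : ℤ))) ^ j := by
    rw [← zpow_natCast q 2, ← zpow_mul, ← zpow_natCast (q ^ (_ : ℤ)) j, ← zpow_mul,
      ← zpow_add₀ hq, ← zpow_add₀ hq]
    congr 1
    push_cast
    ring
  rw [thetaTerm, hexp, neg_one_zpow_natCast_sub, sub_eq_add_neg (j : ℤ), zpow_add₀ hx,
    zpow_natCast x j, neg_pow (_ * _), mul_pow]
  ring

lemma sum_gaussBinom_mul_appellTerm (hq : q ≠ 0) (x : K) (N : ℕ) :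
    ∑ j ∈ Finset.range (2 * N + 1), gaussBinom (q ^ 2) (2 * N) j * appellTerm q x ((j : ℤ) - N) =
      (-1) ^ N * q ^ ((N : ℤ) ^ 2 - N) *
        partialFractionSum q (2 * N) N (x * (q ^ 2) ^ (-(N : ℤ))) := by
  rw [partialFractionSum, Finset.mul_sum]
  refine Finset.sum_congr rfl fun j _ ↦ ?_
  have hexp : q ^ (((j : ℤ) - N) ^ 2 + ((j : ℤ) - N)) =
      q ^ ((N : ℤ) ^ 2 - N) * q ^ ((j : ℤ) ^ 2 + j - 2 * j * N) := by
    rw [← zpow_add₀ hq]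
    congr 1
    ring
  rw [appellTerm, hexp, neg_one_zpow_natCast_sub, shift_mul_pow hq]
  ring

/-- The truncated form of `(∑ thetaTerm) * (∑ appellTerm) = (q ^ 2; q ^ 2)_∞ ^ 3`: the product
`(x q ^ (-2N); q ^ 2)_{2N}` of the first factor cancels the denominator of the second one. -/
lemma sum_thetaTerm_mul_sum_appellTerm_truncated (hq : q ≠ 0) (hx : x ≠ 0)
    (h : ∀ i : ℤ, 1 - x * (q ^ 2) ^ i ≠ 0) (N : ℕ) :
    (∑ j ∈ Finset.range (2 * N + 1),
          gaussBinom (q ^ 2) (2 * N) j * thetaTerm q x ((j : ℤ) - N)) *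
        (∑ j ∈ Finset.range (2 * N + 1),
          gaussBinom (q ^ 2) (2 * N) j * appellTerm q x ((j : ℤ) - N)) *
        (1 - x * (q ^ 2) ^ N) =
      qPochhammer (q ^ 2) (q ^ 2) (2 * N) := by
  have hpf := partialFractionSum_mul_qPochhammer hq (n := 2 * N) (c := N) (by lia)
    (x * (q ^ 2) ^ (-(N : ℤ))) fun i _ ↦ by simpa only [shift_mul_pow hq] using h _
  have hlast : x * (q ^ 2) ^ (-(N : ℤ)) * (q ^ 2) ^ (2 * N) = x * (q ^ 2) ^ N := by
    rw [shift_mul_pow hq, ← zpow_natCast (q ^ 2) N]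
    congr 2
    push_cast
    ring
  have hsign : (-1 : K) ^ N * (-1) ^ N = 1 := by rw [← mul_pow, neg_mul_neg, one_mul, one_pow]
  have hunit : x ^ (-(N : ℤ)) * q ^ ((N : ℤ) ^ 2 + N) * q ^ ((N : ℤ) ^ 2 - N) *
      (x * (q ^ 2) ^ (-(N : ℤ))) ^ N = 1 := by
    have hqpow : q ^ ((N : ℤ) ^ 2 + N) * q ^ ((N : ℤ) ^ 2 - N) *
        ((q ^ 2) ^ (-(N : ℤ))) ^ N = 1 := by
      rw [← zpow_natCast q 2, ← zpow_mul, ← zpow_natCast (q ^ (_ : ℤ)) N, ← zpow_mul,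
        ← zpow_add₀ hq, ← zpow_add₀ hq, ← zpow_zero q]
      congr 1
      push_cast
      ring
    have hxpow : x ^ (-(N : ℤ)) * x ^ N = 1 := by
      rw [zpow_neg, zpow_natCast, inv_mul_cancel₀ (pow_ne_zero N hx)]
    rw [mul_pow]
    linear_combination x ^ (-(N : ℤ)) * x ^ N * hqpow + hxpow
  rw [qPochhammer_succ, hlast] at hpf
  rw [sum_gaussBinom_mul_thetaTerm hq hx, sum_gaussBinom_mul_appellTerm hq]
  set y := x * (q ^ 2) ^ (-(N : ℤ))
  linear_combination ((-1) ^ N * (-1) ^ N * x ^ (-(N : ℤ)) * q ^ ((N : ℤ) ^ 2 + N) *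
    q ^ ((N : ℤ) ^ 2 - N)) * hpf +
    qPochhammer (q ^ 2) (q ^ 2) (2 * N) * ((-1) ^ N * (-1) ^ N * hunit + hsign)

end Field

section Limit

open Filter Topology

/-- The central Gaussian binomials `[2N, N + k]`, extended by zero to all integers `k`. -/
def centralGaussBinom (p : ℂ) (N : ℕ) (k : ℤ) : ℂ :=
  if |k| ≤ N then gaussBinom p (2 * N) (N + k).toNat else 0

lemma tsum_centralGaussBinom_mul (p : ℂ) (N : ℕ) (F : ℤ → ℂ) :
    ∑' k, centralGaussBinom p N k * F k =
      ∑ j ∈ Finset.range (2 * N + 1), gaussBinom p (2 * N) j * F ((j : ℤ) - N) := by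
  rw [tsum_eq_sum (s := Finset.Icc (-(N : ℤ)) N) fun k hk ↦ by
    rw [centralGaussBinom, if_neg (by rwa [abs_le, ← Finset.mem_Icc]), zero_mul]]
  refine (Finset.sum_nbij (fun j : ℕ ↦ (j : ℤ) - N) ?_ ?_ ?_ ?_).symm
  · intro j hj
    simp only [Finset.mem_range, Finset.mem_Icc] at hj ⊢
    lia
  · intro i _ j _ h
    simpa using h
  · intro k hk
    simp only [Finset.coe_Icc, Set.mem_Icc] at hk
    exact ⟨(N + k).toNat, by simp only [Finset.coe_range, Set.mem_Iio]; lia, by simp only; lia⟩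
  · intro j hj
    rw [Finset.mem_range] at hj
    rw [centralGaussBinom, if_pos (abs_le.2 (by lia)), add_sub_cancel, Int.toNat_natCast]

variable {p : ℂ}

lemma qPochhammer_self_ne_zero (hp : ‖p‖ < 1) (n : ℕ) : qPochhammer p p n ≠ 0 := by
  refine Finset.prod_ne_zero_iff.2 fun i _ ↦ sub_ne_zero.2 fun h ↦ ?_
  have hlt := pow_lt_one₀ (norm_nonneg p) hp i.succ_ne_zero
  rw [← norm_pow, pow_succ', ← h, norm_one] at hlt
  exact lt_irrefl _ hlt

lemma tprod_one_sub_pow_ne_zero (hp : ‖p‖ < 1) : ∏' n : ℕ, (1 - p ^ (n + 1)) ≠ 0 := by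
  have hne (n : ℕ) : 1 + -p ^ (n + 1) ≠ 0 := by
    have h := qPochhammer_self_ne_zero hp (n + 1)
    rw [qPochhammer_succ, ← pow_succ', sub_eq_add_neg] at h
    exact right_ne_zero_of_mul h
  simpa only [← sub_eq_add_neg] using tprod_one_add_ne_zero_of_summable hne <| by
    simpa only [norm_neg, norm_pow] using
      (summable_nat_add_iff 1).2 (summable_geometric_of_lt_one (norm_nonneg p) hp)

lemma tendsto_qPochhammer_self (hp : ‖p‖ < 1) :
    Tendsto (qPochhammer p p) atTop (𝓝 (∏' n : ℕ, (1 - p ^ (n + 1)))) :=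
  (ModularForm.multipliable_one_sub_pow hp).hasProd.tendsto_prod_nat.congr fun n ↦ by
    simp only [qPochhammer, pow_succ']

lemma centralGaussBinom_eq (hp : ‖p‖ < 1) {N : ℕ} {k : ℤ} (hk : |k| ≤ N) :
    centralGaussBinom p N k = qPochhammer p p (2 * N) * (qPochhammer p p (N + k).toNat)⁻¹ *
      (qPochhammer p p (N - k).toNat)⁻¹ := by
  have h := gaussBinom_add_mul_qPochhammer p (N + k).toNat (N - k).toNat
  rw [abs_le] at hk
  rw [show (N + k).toNat + (N - k).toNat = 2 * N by lia] at h
  rw [centralGaussBinom, if_pos (abs_le.2 hk), ← h]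
  have h₁ := qPochhammer_self_ne_zero hp (N + k).toNat
  have h₂ := qPochhammer_self_ne_zero hp (N - k).toNat
  field_simp

lemma exists_norm_centralGaussBinom_le (hp : ‖p‖ < 1) :
    ∃ B : ℝ, ∀ N k, ‖centralGaussBinom p N k‖ ≤ B := by
  have hlim := tendsto_qPochhammer_self hp
  obtain ⟨B₁, hB₁⟩ := (Metric.isBounded_range_of_tendsto _ hlim).exists_norm_le
  obtain ⟨B₂, hB₂⟩ := (Metric.isBounded_range_of_tendsto _
    (hlim.inv₀ (tprod_one_sub_pow_ne_zero hp))).exists_norm_le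
  have h₁ (n : ℕ) : ‖qPochhammer p p n‖ ≤ B₁ := hB₁ _ ⟨n, rfl⟩
  have h₂ (n : ℕ) : ‖(qPochhammer p p n)⁻¹‖ ≤ B₂ := hB₂ _ ⟨n, rfl⟩
  have hB₁_nonneg : 0 ≤ B₁ := (norm_nonneg _).trans (h₁ 0)
  have hB₂_nonneg : 0 ≤ B₂ := (norm_nonneg _).trans (h₂ 0)
  refine ⟨B₁ * B₂ * B₂, fun N k ↦ ?_⟩
  by_cases hk : |k| ≤ N
  · rw [centralGaussBinom_eq hp hk, norm_mul, norm_mul]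
    gcongr <;> simp only [h₁, h₂]
  · rw [centralGaussBinom, if_neg hk, norm_zero]
    positivity

lemma tendsto_centralGaussBinom (hp : ‖p‖ < 1) (k : ℤ) :
    Tendsto (fun N ↦ centralGaussBinom p N k) atTop (𝓝 (∏' n : ℕ, (1 - p ^ (n + 1)))⁻¹) := by
  have htoNat (l : ℤ) : Tendsto (fun N : ℕ ↦ (N + l).toNat) atTop atTop := by
    refine tendsto_atTop.2 fun b ↦ ?_
    filter_upwards [eventually_ge_atTop (b + l.natAbs)] with N hN
    lia
  have hlim := tendsto_qPochhammer_self hp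
  have hinv := hlim.inv₀ (tprod_one_sub_pow_ne_zero hp)
  have h := ((hlim.comp (tendsto_id.const_mul_atTop' two_pos)).mul (hinv.comp (htoNat k))).mul
    (hinv.comp (htoNat (-k)))
  rw [mul_inv_cancel₀ (tprod_one_sub_pow_ne_zero hp), one_mul] at h
  refine h.congr' ?_
  filter_upwards [eventually_ge_atTop k.natAbs] with N hN
  rw [centralGaussBinom_eq hp (abs_le.2 (by lia))]
  rfl

lemma tendsto_tsum_centralGaussBinom_mul (hp : ‖p‖ < 1) {F : ℤ → ℂ} (hF : Summable F) :
    Tendsto (fun N ↦ ∑' k, centralGaussBinom p N k * F k) atTop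
      (𝓝 ((∏' n : ℕ, (1 - p ^ (n + 1)))⁻¹ * ∑' k, F k)) := by
  obtain ⟨B, hB⟩ := exists_norm_centralGaussBinom_le hp
  rw [← tsum_mul_left]
  refine tendsto_tsum_of_dominated_convergence (hF.norm.mul_left B)
    (fun k ↦ (tendsto_centralGaussBinom hp k).mul_const _) (Eventually.of_forall fun N k ↦ ?_)
  rw [norm_mul]
  gcongr
  exact hB N k

theorem tsum_thetaTerm_mul_tsum_appellTerm {q x : ℂ} (hq : q ≠ 0) (hq1 : ‖q‖ < 1) (hx : x ≠ 0)
    (h : ∀ i : ℤ, 1 - x * (q ^ 2) ^ i ≠ 0) (hθ : Summable (thetaTerm q x))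
    (hA : Summable (appellTerm q x)) :
    (∑' k, thetaTerm q x k) * ∑' k, appellTerm q x k =
      (∏' n : ℕ, (1 - (q ^ 2) ^ (n + 1))) ^ 3 := by
  have hp : ‖q ^ 2‖ < 1 := by
    rw [norm_pow]
    exact pow_lt_one₀ (norm_nonneg q) hq1 two_ne_zero
  have hlast : Tendsto (fun N : ℕ ↦ 1 - x * (q ^ 2) ^ N) atTop (𝓝 (1 - x * 0)) :=
    ((tendsto_pow_atTop_nhds_zero_of_norm_lt_one hp).const_mul x).const_sub 1
  have hlhs := ((tendsto_tsum_centralGaussBinom_mul hp hθ).mul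
    (tendsto_tsum_centralGaussBinom_mul hp hA)).mul hlast
  have hrhs := (tendsto_qPochhammer_self hp).comp (tendsto_id.const_mul_atTop' two_pos)
  have hE := tprod_one_sub_pow_ne_zero hp
  have hlim := tendsto_nhds_unique (hlhs.congr fun N ↦ by
    rw [tsum_centralGaussBinom_mul, tsum_centralGaussBinom_mul]
    exact sum_thetaTerm_mul_sum_appellTerm_truncated hq hx h N) hrhs
  field_simp at hlim
  linear_combination hlim

end Limit

end ThetaAppell

section Exponentials

open Filter Topology Asymptotics

lemma e2_add (z w : ℂ) : e2 (z + w) = e2 z * e2 w := by simp only [e2, mul_add, Complex.exp_add]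

lemma e2_ne_zero (z : ℂ) : e2 z ≠ 0 := Complex.exp_ne_zero _

lemma e2_zpow (z : ℂ) (k : ℤ) : e2 z ^ k = e2 (k * z) := by
  rw [e2, e2, ← Complex.exp_int_mul, mul_left_comm]

lemma qpow_eq_e2 (τ x : ℂ) : qpow τ x = e2 (τ * x) := by rw [qpow, e2, mul_assoc]

lemma norm_e2 (z : ℂ) : ‖e2 z‖ = Real.exp (-(2 * Real.pi * z.im)) := by
  rw [e2, Complex.norm_exp]
  simp

lemma neg_one_zpow_neg (l : ℤ) : (-1 : ℂ) ^ (-l) = (-1) ^ l := by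
  rw [zpow_neg, ← inv_zpow, inv_neg_one]

lemma neg_one_zpow_mul_self (l : ℤ) : (-1 : ℂ) ^ l * (-1) ^ l = 1 := by
  rw [← mul_zpow, neg_one_mul, neg_neg, one_zpow]

lemma summable_e2_quadratic {A : ℂ} (hA : 0 < A.im) (B C : ℂ) :
    Summable fun k : ℤ ↦ e2 (A * k ^ 2 + B * k + C) := by
  have h := (summable_jacobiTheta₂_term_iff B (2 * A)).2 (by simpa using hA)
  refine (h.mul_right (e2 C)).congr fun k ↦ ?_
  rw [e2_add, e2, jacobiTheta₂_term]
  congr 2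
  ring

lemma summable_neg_one_zpow_mul {f : ℤ → ℂ} (hf : Summable f) :
    Summable fun k : ℤ ↦ (-1) ^ k * f k :=
  Summable.of_norm <| hf.norm.congr fun k ↦ by simp

lemma summable_exp_quadratic {T : ℝ} (hT : 0 < T) (c : ℝ) :
    Summable fun k : ℤ ↦ Real.exp (c * k - T * k ^ 2) := by
  have hA : 0 < (I * (T / (2 * Real.pi) : ℝ)).im := by
    rw [I_mul_im, ofReal_re]
    positivity
  refine (summable_e2_quadratic hA (-(I * (c / (2 * Real.pi) : ℝ))) 0).norm.congr fun k ↦ ?_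
  rw [norm_e2]
  have hI : I * (T / (2 * Real.pi) : ℝ) * k ^ 2 + -(I * (c / (2 * Real.pi) : ℝ)) * k + 0 =
      I * (T / (2 * Real.pi) * k ^ 2 - c / (2 * Real.pi) * k : ℝ) := by
    push_cast
    ring
  rw [hI, I_mul_im, ofReal_re]
  field_simp
  ring_nf

lemma summable_of_norm_le_exp_quadratic₂ {f : ℤ × ℤ → ℂ} {T : ℝ} (hT : 0 < T) (c d K : ℝ)
    (hf : ∀ r l, ‖f (r, l)‖ ≤ Real.exp (c * r + d * l + K - T * (r ^ 2 + l ^ 2))) :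
    Summable f := by
  have h := (summable_exp_quadratic hT c).mul_of_nonneg (summable_exp_quadratic hT d)
    (fun _ ↦ (Real.exp_pos _).le) fun _ ↦ (Real.exp_pos _).le
  refine .of_norm_bounded (h.mul_right (Real.exp K)) fun x ↦ (hf x.1 x.2).trans_eq ?_
  rw [← Real.exp_add, ← Real.exp_add]
  ring_nf

lemma summable_of_norm_le_exp_quadratic₃ {f : (ℤ × ℤ) × ℤ → ℂ} {T : ℝ} (hT : 0 < T)
    (c d e K : ℝ) (hf : ∀ r l s,
      ‖f ((r, l), s)‖ ≤ Real.exp (c * r + d * l + e * s + K - T * (r ^ 2 + l ^ 2 + s ^ 2))) :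
    Summable f := by
  have h₂ := (summable_exp_quadratic hT c).mul_of_nonneg (summable_exp_quadratic hT d)
    (fun _ ↦ (Real.exp_pos _).le) fun _ ↦ (Real.exp_pos _).le
  have h₃ := h₂.mul_of_nonneg (summable_exp_quadratic hT e)
    (fun _ ↦ mul_nonneg (Real.exp_pos _).le (Real.exp_pos _).le) fun _ ↦ (Real.exp_pos _).le
  refine .of_norm_bounded (h₃.mul_right (Real.exp K)) fun x ↦ (hf x.1.1 x.1.2 x.2).trans_eq ?_
  rw [← Real.exp_add, ← Real.exp_add, ← Real.exp_add]
  ring_nf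

lemma isBigO_inv_one_sub_e2 {τ : ℂ} (hτ : 0 < τ.im) (w : ℂ) :
    (fun j : ℤ ↦ (1 - e2 (w + 2 * j * τ))⁻¹) =O[cofinite] fun _ ↦ (1 : ℝ) := by
  have hnorm (j : ℤ) :
      ‖e2 (w + 2 * j * τ)‖ = Real.exp (-(2 * Real.pi * (w.im + 2 * τ.im * j))) := by
    rw [norm_e2]
    simp [mul_right_comm]
  have hpos : 0 < 2 * τ.im := by positivity
  rw [Int.cofinite_eq, isBigO_sup]
  constructor
  · have hlim : Tendsto (fun j : ℤ ↦ ‖(1 - e2 (w + 2 * j * τ))‖) atBot atTop := by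
      have hexp : Tendsto (fun j : ℤ ↦ ‖e2 (w + 2 * j * τ)‖) atBot atTop := by
        simp only [hnorm]
        exact Real.tendsto_exp_atTop.comp <| tendsto_neg_atBot_atTop.comp <|
          (tendsto_atBot_add_const_left _ _ <|
            (tendsto_intCast_atBot_iff.2 tendsto_id).const_mul_atBot hpos).const_mul_atBot
              Real.two_pi_pos
      refine tendsto_atTop_mono (fun j ↦ ?_) (tendsto_atTop_add_const_right _ (-1) hexp)
      rw [norm_sub_rev, ← sub_eq_add_neg, ← norm_one (α := ℂ)]
      exact norm_sub_norm_le _ _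
    exact ((tendsto_inv₀_cobounded).comp (tendsto_norm_atTop_iff_cobounded.1 hlim)).isBigO_one ℝ
  · have hlim : Tendsto (fun j : ℤ ↦ e2 (w + 2 * j * τ)) atTop (𝓝 0) := by
      rw [tendsto_zero_iff_norm_tendsto_zero]
      simp only [hnorm]
      exact Real.tendsto_exp_atBot.comp <| tendsto_neg_atTop_atBot.comp <|
        (tendsto_atTop_add_const_left _ _ <|
          tendsto_intCast_atTop_atTop.const_mul_atTop hpos).const_mul_atTop Real.two_pi_pos
    exact ((hlim.const_sub 1).inv₀ (by simp)).isBigO_one ℝ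

lemma summable_div_one_sub_e2 {τ : ℂ} (hτ : 0 < τ.im) (w : ℂ) {f : ℤ → ℂ} (hf : Summable f) :
    Summable fun j : ℤ ↦ f j / (1 - e2 (w + 2 * j * τ)) := by
  refine summable_of_isBigO hf.norm ?_
  simpa only [div_eq_mul_inv, mul_one] using
    (isBigO_refl f cofinite).norm_right.mul (isBigO_inv_one_sub_e2 hτ w)

end Exponentials

lemma hasSum_zpow_truncated {K : Type*} [Field K] [TopologicalSpace K] [IsTopologicalRing K]
    {X : K} (hX₀ : X ≠ 0) (hX₁ : 1 - X ≠ 0) (A B : ℤ) :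
    HasSum (fun s : ℤ ↦ ((if A ≤ s then 1 else 0) - (if B ≤ s then 1 else 0)) * X ^ s)
      ((X ^ A - X ^ B) / (1 - X)) := by
  induction B using Int.inductionOn' (b := A) with
  | zero => simp
  | succ B _ ih =>
    convert ih.add (hasSum_ite_eq B (X ^ B)) using 1
    · funext s
      rcases lt_trichotomy s B with h | rfl | h
      · simp [h.not_ge, h.ne, show ¬B + 1 ≤ s by lia]
      · simp [sub_mul]
      · simp [h.le, h.ne', show B + 1 ≤ s by lia]
    · rw [zpow_add_one₀ hX₀]
      field_simp
      ring
  | pred B _ ih =>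
    convert ih.add (hasSum_ite_eq (B - 1) (-X ^ (B - 1))) using 1
    · funext s
      rcases lt_trichotomy s (B - 1) with h | rfl | h
      · simp [h.ne, show ¬B ≤ s by lia, show ¬B ≤ s + 1 by lia]
      · simp [sub_eq_add_neg, add_mul]
      · simp [h.ne', show B ≤ s by lia, show B ≤ s + 1 by lia]
    · rw [zpow_sub_one₀ hX₀]
      field_simp
      ring

/-- On the cone where `s - N l` and `r - s` have the same sign, the indefinite quadratic form of
the triple series is bounded below by a positive definite one. -/
lemma sq_add_sq_add_sq_le_of_mem_cone {N r l s : ℝ} (hN : 1 ≤ N)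
    (h : 0 ≤ (s - N * l) * (r - s)) :
    (r ^ 2 + l ^ 2 + s ^ 2) / (N + 1) ≤ N * r ^ 2 + 2 * r * s + l ^ 2 + 2 * l * s := by
  rw [div_le_iff₀ (by positivity)]
  have hsq : r ^ 2 + l ^ 2 + s ^ 2 ≤ N * r ^ 2 + N * l ^ 2 + s ^ 2 := by nlinarith
  refine hsq.trans ?_
  linear_combination 2 * h + sq_nonneg (l + s + N * r)

section TripleSeries

/-- The general term of the theta series attached to the cosets of `N ℤ`, where `N = 2n + 1`; with
`q = e ^ 2πiτ` it is `e ^ 2πiua q ^ (u² / N)`. -/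
def gaussTerm (τ a : ℂ) (n : ℕ) (u : ℤ) : ℂ := e2 (u * a + τ * (u ^ 2 / (2 * n + 1)))

/-- The theta function of the coset `s + N ℤ`, where `N = 2n + 1`. -/
def cosetTheta (τ a : ℂ) (n : ℕ) (s : ℤ) : ℂ := ∑' r : ℤ, gaussTerm τ a n ((2 * n + 1) * r + s)

/-- The general term `(-1) ^ l e ^ 2πisb q ^ (l² - N l + 2ls - s² / N)`, where `N = 2n + 1`, of the
indefinite theta series (of Hecke type) which express the correction terms. -/
def heckeTerm (τ b : ℂ) (n : ℕ) (s l : ℤ) : ℂ :=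
  (-1) ^ l * e2 (s * b + τ * (l ^ 2 - (2 * n + 1) * l + 2 * l * s - s ^ 2 / (2 * n + 1)))

/-- The sum of `heckeTerm` over the half-line `N l ≤ s`, where `N = 2n + 1`. -/
def heckeHalfSum (τ b : ℂ) (n : ℕ) (s : ℤ) : ℂ :=
  ∑' l : ℤ, if (2 * n + 1) * l ≤ s then heckeTerm τ b n s l else 0

/-- The alternating theta series `∑ (-1) ^ l e ^ 2πilz q ^ ((N + 1) l² + N l)`, where
`N = 2n + 1`. It is `θ^{(-)}_{N,N+1}(τ, z / (N + 1))` up to an elementary factor. -/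
def signedTheta (τ : ℂ) (n : ℕ) (z : ℂ) : ℂ :=
  ∑' l : ℤ, (-1) ^ l * e2 (l * z + τ * ((2 * n + 2) * l ^ 2 + (2 * n + 1) * l))

/-- The Appell–Lerch sum which is the main ingredient of `Phi1` and `Phi2`. -/
def appellLerch (τ : ℂ) (n : ℕ) (a w : ℂ) : ℂ :=
  ∑' j : ℤ, gaussTerm τ a n ((2 * n + 1) * j) / (1 - e2 (w + 2 * j * τ))

/-- The general term, indexed by `((r, l), s)`, of the triple series which is summed in two ways.
The coefficient is supported on a cone, up to a shift. -/
def tripleTerm (τ a b : ℂ) (n : ℕ) (x : (ℤ × ℤ) × ℤ) : ℂ :=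
  ((if (2 * n + 1) * x.1.2 ≤ x.2 then 1 else 0) - (if x.1.1 + n + 1 ≤ x.2 then 1 else 0)) *
    (gaussTerm τ a n ((2 * n + 1) * x.1.1 + x.2) * heckeTerm τ b n x.2 x.1.2)

lemma two_mul_natCast_add_one_ne_zero (n : ℕ) : (2 * n + 1 : ℂ) ≠ 0 := by
  exact_mod_cast (2 * n).succ_ne_zero

lemma hasSum_mul_prod {ι κ : Type*} {f : ι → ℂ} {g : κ → ℂ} (hf : Summable f) (hg : Summable g) :
    HasSum (fun x : ι × κ ↦ f x.1 * g x.2) ((∑' i, f i) * ∑' k, g k) := by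
  rw [tsum_mul_tsum_of_summable_norm hf.norm hg.norm]
  exact (summable_mul_of_summable_norm hf.norm hg.norm).hasSum

section Summability

variable {τ : ℂ} (hτ : 0 < τ.im)
include hτ

lemma summable_gaussTerm_residue (a : ℂ) (n : ℕ) (s : ℤ) :
    Summable fun r : ℤ ↦ gaussTerm τ a n ((2 * n + 1) * r + s) := by
  have hA : 0 < (τ * (2 * n + 1)).im := by
    rw [show (2 * n + 1 : ℂ) = ((2 * n + 1 : ℝ) : ℂ) by push_cast; rfl, im_mul_ofReal]
    positivity
  refine (summable_e2_quadratic hA ((2 * n + 1) * a + 2 * s * τ)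
    (s * a + τ * (s ^ 2 / (2 * n + 1)))).congr fun r ↦ ?_
  have hN := two_mul_natCast_add_one_ne_zero n
  rw [gaussTerm]
  congr 1
  push_cast
  field_simp
  ring

lemma summable_heckeTerm (b : ℂ) (n : ℕ) (s : ℤ) : Summable (heckeTerm τ b n s) := by
  refine summable_neg_one_zpow_mul <| (summable_e2_quadratic hτ (τ * (2 * s - (2 * n + 1)))
    (s * b - τ * (s ^ 2 / (2 * n + 1)))).congr fun l ↦ ?_
  ring_nf

lemma summable_signedTheta (n : ℕ) (z : ℂ) : Summable fun l : ℤ ↦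
    (-1 : ℂ) ^ l * e2 (l * z + τ * ((2 * n + 2) * l ^ 2 + (2 * n + 1) * l)) := by
  have hA : 0 < (τ * (2 * n + 2)).im := by
    rw [show (2 * n + 2 : ℂ) = ((2 * n + 2 : ℝ) : ℂ) by push_cast; rfl, im_mul_ofReal]
    positivity
  refine summable_neg_one_zpow_mul <|
    (summable_e2_quadratic hA (z + τ * (2 * n + 1)) 0).congr fun l ↦ ?_
  ring_nf

lemma summable_appellLerch (n : ℕ) (a w : ℂ) : Summable fun j : ℤ ↦
    gaussTerm τ a n ((2 * n + 1) * j) / (1 - e2 (w + 2 * j * τ)) :=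
  summable_div_one_sub_e2 hτ w <| by simpa using summable_gaussTerm_residue hτ a n 0

end Summability

lemma e2_mul_e2_sq_zpow (τ w : ℂ) (k : ℤ) : e2 w * (e2 τ ^ 2) ^ k = e2 (w + 2 * k * τ) := by
  rw [← zpow_natCast, ← zpow_mul, e2_zpow, ← e2_add]
  push_cast
  ring_nf

lemma appellTerm_e2 (τ w : ℂ) (k : ℤ) :
    appellTerm (e2 τ) (e2 w) k = (-1) ^ k * e2 (τ * (k ^ 2 + k)) / (1 - e2 (w + 2 * k * τ)) := by
  rw [appellTerm, e2_mul_e2_sq_zpow, e2_zpow]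
  push_cast
  ring_nf

lemma summable_appellTerm_e2 {τ : ℂ} (hτ : 0 < τ.im) (w : ℂ) :
    Summable (appellTerm (e2 τ) (e2 w)) := by
  simp only [funext (appellTerm_e2 τ w)]
  refine summable_div_one_sub_e2 hτ w <| summable_neg_one_zpow_mul <|
    (summable_e2_quadratic hτ τ 0).congr fun k ↦ ?_
  ring_nf

lemma tsum_heckeTerm (τ b : ℂ) (n : ℕ) (s : ℤ) : ∑' l, heckeTerm τ b n s l = 0 := by
  have hodd (l : ℤ) : heckeTerm τ b n s (2 * n + 1 - 2 * s - l) = -heckeTerm τ b n s l := by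
    have hsign : (-1 : ℂ) ^ (2 * n + 1 - 2 * s - l) = -(-1) ^ l := by
      have h : Odd (2 * n + 1 - 2 * s : ℤ) := ⟨n - s, by ring⟩
      rw [sub_eq_add_neg, zpow_add₀ (neg_ne_zero.2 one_ne_zero), h.neg_one_zpow,
        neg_one_zpow_neg, neg_one_mul]
    rw [heckeTerm, heckeTerm, hsign, neg_mul]
    push_cast
    ring_nf
  have h := (Equiv.subLeft (2 * (n : ℤ) + 1 - 2 * s)).tsum_eq (heckeTerm τ b n s)
  simp only [Equiv.subLeft_apply, hodd, tsum_neg] at h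
  exact self_eq_neg.1 h.symm

lemma norm_gaussTerm_mul_heckeTerm (τ a b : ℂ) (n : ℕ) (r s l : ℤ) :
    ‖gaussTerm τ a n ((2 * n + 1) * r + s) * heckeTerm τ b n s l‖ =
      Real.exp (-(2 * Real.pi * (((2 * n + 1) * r + s) * a.im + s * b.im + τ.im *
        ((2 * n + 1) * r ^ 2 + 2 * r * s + l ^ 2 + 2 * l * s - (2 * n + 1) * l)))) := by
  have hN := two_mul_natCast_add_one_ne_zero n
  have hexp : (((2 * n + 1) * r + s : ℤ) : ℂ) * a +
      τ * ((((2 * n + 1) * r + s : ℤ) : ℂ) ^ 2 / (2 * n + 1)) +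
      (s * b + τ * (l ^ 2 - (2 * n + 1) * l + 2 * l * s - s ^ 2 / (2 * n + 1))) =
      a * ((2 * n + 1) * r + s : ℝ) + b * (s : ℝ) + τ *
        ((2 * n + 1) * r ^ 2 + 2 * r * s + l ^ 2 + 2 * l * s - (2 * n + 1) * l : ℝ) := by
    push_cast
    field_simp
    ring
  rw [gaussTerm, heckeTerm, mul_left_comm, norm_mul, norm_zpow, norm_neg, norm_one, one_zpow,
    one_mul, ← e2_add, hexp, norm_e2]
  simp only [add_im, im_mul_ofReal]
  ring_nf

lemma summable_tripleTerm {τ : ℂ} (hτ : 0 < τ.im) (a b : ℂ) (n : ℕ) :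
    Summable (tripleTerm τ a b n) := by
  set y := 2 * Real.pi * τ.im
  have hy : 0 < y := by positivity
  set A := 2 * Real.pi * a.im
  set B := 2 * Real.pi * b.im
  refine summable_of_norm_le_exp_quadratic₃ (T := y / (2 * n + 2)) (by positivity)
    (2 * (n + 1) * (y * (2 * n + 1) - y / (2 * n + 2)) - (2 * n + 1) * A) (y * (2 * n + 1))
    (2 * y * (n + 1) - A - B) ((n + 1) ^ 2 * (y * (2 * n + 1) - y / (2 * n + 2)))
    fun r l s ↦ ?_
  by_cases hcone : 0 ≤ (s - (2 * n + 1) * l) * (r + n + 1 - s)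
  · have hcone' : 0 ≤ (s - (2 * n + 1) * l : ℝ) * (r + n + 1 - s) := by exact_mod_cast hcone
    have hcoeff : ‖((if (2 * n + 1) * l ≤ s then 1 else 0) -
        (if r + n + 1 ≤ s then 1 else 0) : ℂ)‖ ≤ 1 := by
      split_ifs <;> simp
    have hquad := mul_le_mul_of_nonneg_left
      (sq_add_sq_add_sq_le_of_mem_cone (by linarith [n.cast_nonneg (α := ℝ)]) hcone') hy.le
    rw [tripleTerm, norm_mul, norm_gaussTerm_mul_heckeTerm]
    refine (mul_le_of_le_one_left (Real.exp_pos _).le hcoeff).trans (Real.exp_le_exp.2 ?_)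
    simp only [A, B, y] at hquad ⊢
    rw [show (2 * n + 1 + 1 : ℝ) = 2 * n + 2 by ring] at hquad
    linear_combination hquad
  · have hzero : tripleTerm τ a b n ((r, l), s) = 0 := by
      have hiff : (2 * n + 1) * l ≤ s ↔ r + n + 1 ≤ s := by
        constructor <;> intro h <;> by_contra! h' <;> apply hcone
        · exact mul_nonneg (by lia) (by lia)
        · exact mul_nonneg_of_nonpos_of_nonpos (by lia) (by lia)
      simp only [tripleTerm, hiff, sub_self, zero_mul]
    rw [hzero, norm_zero]
    exact (Real.exp_pos _).le

lemma gaussTerm_mul_heckeTerm (τ a b : ℂ) (n : ℕ) (r s l : ℤ) :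
    gaussTerm τ a n ((2 * n + 1) * r + s) * heckeTerm τ b n s l =
      gaussTerm τ a n ((2 * n + 1) * r) * heckeTerm τ b n 0 l *
        e2 (a + b + 2 * (r + l : ℤ) * τ) ^ s := by
  have hN := two_mul_natCast_add_one_ne_zero n
  simp only [gaussTerm, heckeTerm, e2_zpow, mul_assoc, mul_left_comm _ ((-1 : ℂ) ^ l), ← e2_add]
  congr 2
  push_cast
  field_simp
  ring

lemma hasSum_signedTheta_mul_appellLerch {τ : ℂ} (hτ : 0 < τ.im) (a b : ℂ) (n : ℕ) :
    HasSum (fun x : ℤ × ℤ ↦ gaussTerm τ a n ((2 * n + 1) * x.1) * heckeTerm τ b n 0 x.2 *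
        (e2 (a + b + 2 * (x.1 + x.2 : ℤ) * τ) ^ ((2 * n + 1) * x.2) /
          (1 - e2 (a + b + 2 * (x.1 + x.2 : ℤ) * τ))))
      (signedTheta τ n (-((2 * n + 1) * b)) * appellLerch τ n a (a + b)) := by
  let e : ℤ × ℤ ≃ ℤ × ℤ :=
    (Equiv.prodComm ℤ ℤ).trans ((Equiv.neg ℤ).prodShear Equiv.addRight)
  refine (e.hasSum_iff.2 <| hasSum_mul_prod (summable_signedTheta hτ n (-((2 * n + 1) * b)))
    (summable_appellLerch hτ n a (a + b))).congr_fun fun ⟨r, l⟩ ↦ ?_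
  have hN := two_mul_natCast_add_one_ne_zero n
  have hexp : heckeTerm τ b n 0 l * (gaussTerm τ a n ((2 * n + 1) * r) *
        e2 (a + b + 2 * (r + l : ℤ) * τ) ^ ((2 * n + 1) * l)) =
      (-1) ^ l * e2 ((-l : ℤ) * -((2 * n + 1) * b) +
        τ * ((2 * n + 2) * (-l : ℤ) ^ 2 + (2 * n + 1) * (-l : ℤ))) *
        gaussTerm τ a n ((2 * n + 1) * (r + l)) := by
    simp only [heckeTerm, gaussTerm, e2_zpow, mul_assoc, ← e2_add]
    congr 2
    push_cast
    field_simp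
    ring
  simp only [e, Function.comp_apply, Equiv.trans_apply, Equiv.prodComm_apply, Prod.swap_prod_mk,
    Equiv.prodShear_apply, Equiv.neg_apply, Equiv.coe_addRight, neg_one_zpow_neg]
  rw [← mul_div_assoc, ← mul_div_assoc, mul_comm (gaussTerm _ _ _ _), mul_assoc, hexp]

lemma hasSum_signedTheta_mul_appellTerm {τ : ℂ} (hτ : 0 < τ.im) (a b : ℂ) (n : ℕ) :
    HasSum (fun x : ℤ × ℤ ↦ gaussTerm τ a n ((2 * n + 1) * x.1) * heckeTerm τ b n 0 x.2 *
        (e2 (a + b + 2 * (x.1 + x.2 : ℤ) * τ) ^ (x.1 + n + 1) /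
          (1 - e2 (a + b + 2 * (x.1 + x.2 : ℤ) * τ))))
      (e2 ((n + 1) * (a + b)) * (signedTheta τ n ((2 * n + 2) * a + b) *
        ∑' k, appellTerm (e2 τ) (e2 (a + b)) k)) := by
  let e : ℤ × ℤ ≃ ℤ × ℤ := (Equiv.refl ℤ).prodShear Equiv.addLeft
  have h := (e.hasSum_iff.2 <| hasSum_mul_prod (summable_signedTheta hτ n ((2 * n + 2) * a + b))
    (summable_appellTerm_e2 hτ (a + b))).mul_left (e2 ((n + 1) * (a + b)))
  refine h.congr_fun fun ⟨r, l⟩ ↦ ?_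
  have hN := two_mul_natCast_add_one_ne_zero n
  have hexp : gaussTerm τ a n ((2 * n + 1) * r) * (heckeTerm τ b n 0 l *
        e2 (a + b + 2 * (r + l : ℤ) * τ) ^ (r + n + 1)) =
      (-1) ^ l * (e2 ((n + 1) * (a + b)) *
        (e2 (r * ((2 * n + 2) * a + b) + τ * ((2 * n + 2) * r ^ 2 + (2 * n + 1) * r)) *
          e2 (τ * ((r + l : ℤ) ^ 2 + (r + l : ℤ))))) := by
    simp only [heckeTerm, gaussTerm, e2_zpow, mul_assoc, mul_left_comm _ ((-1 : ℂ) ^ l), ← e2_add]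
    congr 2
    push_cast
    field_simp
    ring
  simp only [e, Function.comp_apply, Equiv.prodShear_apply, Equiv.refl_apply, Equiv.coe_addLeft,
    appellTerm_e2]
  rw [← mul_div_assoc, mul_assoc (gaussTerm _ _ _ _), hexp,
    zpow_add₀ (neg_ne_zero.2 one_ne_zero)]
  linear_combination (-1) ^ l * (e2 ((n + 1) * (a + b)) *
    (e2 (r * ((2 * n + 2) * a + b) + τ * ((2 * n + 2) * r ^ 2 + (2 * n + 1) * r)) *
      e2 (τ * ((r + l : ℤ) ^ 2 + (r + l : ℤ))))) / (1 - e2 (a + b + 2 * (r + l : ℤ) * τ)) *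
    -neg_one_zpow_mul_self r

theorem tsum_tripleTerm {τ a b : ℂ} (hτ : 0 < τ.im) (n : ℕ)
    (h : ∀ j : ℤ, 1 - e2 (a + b + 2 * j * τ) ≠ 0) :
    ∑' x, tripleTerm τ a b n x =
      signedTheta τ n (-((2 * n + 1) * b)) * appellLerch τ n a (a + b) -
        e2 ((n + 1) * (a + b)) * (signedTheta τ n ((2 * n + 2) * a + b) *
          ∑' k, appellTerm (e2 τ) (e2 (a + b)) k) := by
  have hfiber (r l : ℤ) : ∑' s, tripleTerm τ a b n ((r, l), s) =
      gaussTerm τ a n ((2 * n + 1) * r) * heckeTerm τ b n 0 l *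
        (e2 (a + b + 2 * (r + l : ℤ) * τ) ^ ((2 * n + 1) * l) /
            (1 - e2 (a + b + 2 * (r + l : ℤ) * τ)) -
          e2 (a + b + 2 * (r + l : ℤ) * τ) ^ (r + n + 1) /
            (1 - e2 (a + b + 2 * (r + l : ℤ) * τ))) := by
    rw [← sub_div, ← (hasSum_zpow_truncated (e2_ne_zero _) (h (r + l)) _ _).tsum_eq,
      ← tsum_mul_left]
    refine tsum_congr fun s ↦ ?_
    rw [tripleTerm, gaussTerm_mul_heckeTerm, mul_left_comm]
  have hdiff := (hasSum_signedTheta_mul_appellLerch hτ a b n).sub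
    (hasSum_signedTheta_mul_appellTerm hτ a b n)
  rw [(summable_tripleTerm hτ a b n).tsum_prod, ← hdiff.tsum_eq]
  exact tsum_congr fun x ↦ (hfiber x.1 x.2).trans (mul_sub _ _ _)

lemma summable_ite {ι : Type*} {f : ι → ℂ} (hf : Summable f) (p : ι → Prop) [DecidablePred p] :
    Summable fun i ↦ if p i then f i else 0 :=
  (hf.indicator {i | p i}).congr fun i ↦ by simp [Set.indicator_apply]

/-- Summing over `r` and `l` first, the second half of the coefficient does not contribute since
`heckeTerm τ b n s` sums to zero. -/
theorem hasSum_cosetTheta_mul_heckeHalfSum {τ : ℂ} (hτ : 0 < τ.im) (a b : ℂ) (n : ℕ) :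
    HasSum (fun s ↦ cosetTheta τ a n s * heckeHalfSum τ b n s) (∑' x, tripleTerm τ a b n x) := by
  have hfiber (s : ℤ) : ∑' x : ℤ × ℤ, tripleTerm τ a b n (x, s) =
      cosetTheta τ a n s * heckeHalfSum τ b n s := by
    have hgauss := summable_gaussTerm_residue hτ a n s
    have hhecke := summable_heckeTerm hτ b n s
    have hpos := hasSum_mul_prod hgauss (summable_ite hhecke fun l ↦ (2 * n + 1) * l ≤ s)
    have hneg := hasSum_mul_prod (summable_ite hgauss fun r ↦ r + n + 1 ≤ s) hhecke
    rw [tsum_heckeTerm, mul_zero] at hneg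
    rw [cosetTheta, heckeHalfSum, ← sub_zero (_ * _), ← (hpos.sub hneg).tsum_eq]
    refine tsum_congr fun x ↦ ?_
    simp only [tripleTerm]
    split_ifs <;> ring
  have hswap := (Equiv.prodComm ℤ (ℤ × ℤ)).summable_iff.2 (summable_tripleTerm hτ a b n)
  have hsum := hswap.prod.hasSum
  rw [← hswap.tsum_prod] at hsum
  rw [← (Equiv.prodComm ℤ (ℤ × ℤ)).tsum_eq]
  exact hsum.congr_fun fun s ↦ (hfiber s).symm

lemma cosetTheta_add (τ a : ℂ) (n : ℕ) (r s : ℤ) :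
    cosetTheta τ a n ((2 * n + 1) * r + s) = cosetTheta τ a n s := by
  rw [cosetTheta, cosetTheta,
    ← (Equiv.addRight r).tsum_eq fun j ↦ gaussTerm τ a n ((2 * n + 1) * j + s)]
  refine tsum_congr fun j ↦ ?_
  rw [Equiv.coe_addRight, mul_add, add_assoc]

lemma cosetTheta_neg (τ a : ℂ) (n : ℕ) (s : ℤ) :
    cosetTheta τ (-a) n s = cosetTheta τ a n (-s) := by
  rw [cosetTheta, cosetTheta, ← (Equiv.neg ℤ).tsum_eq]
  refine tsum_congr fun r ↦ ?_
  rw [Equiv.neg_apply, gaussTerm, gaussTerm]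
  push_cast
  ring_nf

/-- The antisymmetrised theta function of the coset `s + N ℤ`, where `N = 2n + 1`. -/
def oddCosetTheta (τ a : ℂ) (n : ℕ) (s : ℤ) : ℂ := cosetTheta τ a n s - cosetTheta τ a n (-s)

lemma oddCosetTheta_zero (τ a : ℂ) (n : ℕ) : oddCosetTheta τ a n 0 = 0 := by
  rw [oddCosetTheta, neg_zero, sub_self]

lemma oddCosetTheta_neg (τ a : ℂ) (n : ℕ) (s : ℤ) :
    oddCosetTheta τ a n (-s) = -oddCosetTheta τ a n s := by
  rw [oddCosetTheta, oddCosetTheta, neg_neg, neg_sub]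

lemma oddCosetTheta_add (τ a : ℂ) (n : ℕ) (r s : ℤ) :
    oddCosetTheta τ a n ((2 * n + 1) * r + s) = oddCosetTheta τ a n s := by
  rw [oddCosetTheta, oddCosetTheta, cosetTheta_add,
    show -((2 * n + 1) * r + s) = (2 * n + 1) * -r + -s by ring, cosetTheta_add]

lemma hasSum_oddCosetTheta_mul_heckeHalfSum {τ a b : ℂ} (hτ : 0 < τ.im) (n : ℕ)
    (h : ∀ j : ℤ, 1 - e2 (a + b + 2 * j * τ) ≠ 0)
    (h' : ∀ j : ℤ, 1 - e2 (-a + b + 2 * j * τ) ≠ 0) :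
    HasSum (fun s ↦ oddCosetTheta τ a n s * heckeHalfSum τ b n s)
      (signedTheta τ n (-((2 * n + 1) * b)) *
          (appellLerch τ n a (a + b) - appellLerch τ n (-a) (-a + b)) -
        (e2 ((n + 1) * (a + b)) * (signedTheta τ n ((2 * n + 2) * a + b) *
            ∑' k, appellTerm (e2 τ) (e2 (a + b)) k) -
          e2 ((n + 1) * (-a + b)) * (signedTheta τ n ((2 * n + 2) * -a + b) *
            ∑' k, appellTerm (e2 τ) (e2 (-a + b)) k))) := by
  have hsum := (hasSum_cosetTheta_mul_heckeHalfSum hτ a b n).sub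
    (hasSum_cosetTheta_mul_heckeHalfSum hτ (-a) b n)
  rw [tsum_tripleTerm hτ n h, tsum_tripleTerm hτ n h', sub_sub_sub_comm, ← mul_sub] at hsum
  refine hsum.congr_fun fun s ↦ ?_
  rw [oddCosetTheta, cosetTheta_neg, sub_mul]

lemma norm_heckeTerm_add (τ b : ℂ) (n : ℕ) (c r l : ℤ) :
    ‖heckeTerm τ b n ((2 * n + 1) * r + c) (r + l)‖ =
      Real.exp (-(2 * Real.pi * (((2 * n + 1) * r + c) * b.im + τ.im *
        ((2 * n + 1) * r ^ 2 + (r + l) ^ 2 + 2 * (2 * n + 1) * r * l - (2 * n + 1) * (r + l) +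
          2 * l * c - c ^ 2 / (2 * n + 1))))) := by
  have hN := two_mul_natCast_add_one_ne_zero n
  have hexp : (((2 * n + 1) * r + c : ℤ) : ℂ) * b +
      τ * ((r + l : ℤ) ^ 2 - (2 * n + 1) * (r + l : ℤ) +
        2 * (r + l : ℤ) * ((2 * n + 1) * r + c : ℤ) -
        (((2 * n + 1) * r + c : ℤ) : ℂ) ^ 2 / (2 * n + 1)) =
      b * ((2 * n + 1) * r + c : ℝ) + τ * ((2 * n + 1) * r ^ 2 + (r + l) ^ 2 +
        2 * (2 * n + 1) * r * l - (2 * n + 1) * (r + l) + 2 * l * c - c ^ 2 / (2 * n + 1) : ℝ) := by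
    push_cast
    field_simp
    ring
  rw [heckeTerm, norm_mul, norm_zpow, norm_neg, norm_one, one_zpow, one_mul, hexp, norm_e2]
  simp only [add_im, im_mul_ofReal]
  ring_nf

lemma summable_heckeTerm_quadrants {τ : ℂ} (hτ : 0 < τ.im) (b : ℂ) (n : ℕ) (c : ℤ) :
    Summable fun x : ℤ × ℤ ↦
      if 0 ≤ x.1 * x.2 then heckeTerm τ b n ((2 * n + 1) * x.1 + c) (x.1 + x.2) else 0 := by
  set y := 2 * Real.pi * τ.im with hy_def
  have hy : 0 < y := by positivity
  set B := 2 * Real.pi * b.im with hB_def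
  refine summable_of_norm_le_exp_quadratic₂ hy (-(2 * n + 1) * B + y * (2 * n + 1))
    (y * (2 * n + 1) - 2 * y * c) (-c * B + y * (c ^ 2 / (2 * n + 1))) fun r l ↦ ?_
  dsimp only
  split_ifs with hrl
  · have hrl' : (0 : ℝ) ≤ r * l := by exact_mod_cast hrl
    have hform : 0 ≤ y * (2 * n + 1) * (r : ℝ) ^ 2 + 2 * y * (r * l) +
        2 * y * (2 * n + 1) * (r * l) := by positivity
    rw [norm_heckeTerm_add, Real.exp_le_exp]
    simp only [hy_def, hB_def] at hform ⊢
    linear_combination hform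
  · rw [norm_zero]
    exact (Real.exp_pos _).le

/-- The part of the indefinite theta series over the pairs `(s, l)` with `s = N r + c` and
`1 ≤ r ≤ l`, where `N = 2n + 1`. -/
def heckePosQuadrant (τ b : ℂ) (n : ℕ) (c : ℤ) : ℂ :=
  ∑' x : ℕ × ℕ, heckeTerm τ b n ((2 * n + 1) * (x.1 + 1) + c) (x.1 + x.2 + 1)

/-- The part of the indefinite theta series over the pairs `(s, l)` with `s = N r + c` and
`l < r ≤ 0`, where `N = 2n + 1`. -/
def heckeNegQuadrant (τ b : ℂ) (n : ℕ) (c : ℤ) : ℂ :=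
  ∑' x : ℕ × ℕ, heckeTerm τ b n (-((2 * n + 1) * x.1) + c) (-(x.1 + x.2 + 1))

lemma summable_heckePosQuadrant {τ : ℂ} (hτ : 0 < τ.im) (b : ℂ) (n : ℕ) (c : ℤ) :
    Summable fun x : ℕ × ℕ ↦
      heckeTerm τ b n ((2 * n + 1) * (x.1 + 1) + c) (x.1 + x.2 + 1) := by
  have hinj : Function.Injective fun x : ℕ × ℕ ↦ ((x.1 : ℤ) + 1, (x.2 : ℤ)) := by
    rintro ⟨u, v⟩ ⟨u', v'⟩ h
    simpa using h
  refine ((summable_heckeTerm_quadrants hτ b n c).comp_injective hinj).congr fun x ↦ ?_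
  rw [Function.comp_apply, if_pos (by positivity), add_right_comm]

lemma summable_heckeNegQuadrant {τ : ℂ} (hτ : 0 < τ.im) (b : ℂ) (n : ℕ) (c : ℤ) :
    Summable fun x : ℕ × ℕ ↦
      heckeTerm τ b n (-((2 * n + 1) * x.1) + c) (-(x.1 + x.2 + 1)) := by
  have hinj : Function.Injective fun x : ℕ × ℕ ↦ (-(x.1 : ℤ), -((x.2 : ℤ) + 1)) := by
    rintro ⟨u, v⟩ ⟨u', v'⟩ h
    simpa using h
  refine ((summable_heckeTerm_quadrants hτ b n c).comp_injective hinj).congr fun x ↦ ?_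
  rw [Function.comp_apply, if_pos (by rw [neg_mul_neg]; positivity), mul_neg, ← neg_add, add_assoc]

lemma hasSum_range_sub {f : ℕ × ℕ → ℂ} (hf : Summable f) :
    HasSum (fun j : ℕ ↦ ∑ r ∈ Finset.range (j + 1), f (r, j - r)) (∑' x, f x) := by
  have h := (Finset.HasAntidiagonal.sigmaAntidiagonalEquivProd.hasSum_iff.2 hf.hasSum).sigma
    fun j ↦ hasSum_fintype _
  refine h.congr_fun fun j ↦ ?_
  rw [← Finset.Nat.sum_antidiagonal_eq_sum_range_succ_mk, ← Finset.sum_coe_sort]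
  rfl

lemma hasSum_heckePosQuadrant_add_heckeNegQuadrant {τ : ℂ} (hτ : 0 < τ.im) (b : ℂ) (n : ℕ)
    (c : ℤ) :
    HasSum (fun j : ℕ ↦ ∑ r ∈ Finset.range (j + 1),
        (heckeTerm τ b n ((2 * n + 1) * (r + 1) + c) (j + 1) +
          heckeTerm τ b n (-((2 * n + 1) * r) + -c) (-(j + 1))))
      (heckePosQuadrant τ b n c + heckeNegQuadrant τ b n (-c)) := by
  refine ((hasSum_range_sub (summable_heckePosQuadrant hτ b n c)).add
    (hasSum_range_sub (summable_heckeNegQuadrant hτ b n (-c)))).congr_fun fun j ↦ ?_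
  rw [← Finset.sum_add_distrib]
  refine Finset.sum_congr rfl fun r hr ↦ ?_
  have hsub : (r : ℤ) + (j - r : ℕ) = j := by
    have := Finset.mem_range.1 hr
    lia
  simp only [hsub]

lemma heckeHalfSum_eq_tsum_nat (τ b : ℂ) {n : ℕ} {s p : ℤ} (hp : (2 * n + 1) * p ≤ s)
    (hp' : s < (2 * n + 1) * (p + 1)) :
    heckeHalfSum τ b n s = ∑' v : ℕ, heckeTerm τ b n s (p - v) := by
  have hN : (0 : ℤ) < 2 * n + 1 := by positivity
  have hle (l : ℤ) : (2 * n + 1) * l ≤ s ↔ l ≤ p :=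
    ⟨fun h ↦ Int.lt_add_one_iff.1 (lt_of_mul_lt_mul_left (h.trans_lt hp') hN.le),
      fun h ↦ (mul_le_mul_of_nonneg_left h hN.le).trans hp⟩
  have hinj : Function.Injective fun v : ℕ ↦ p - (v : ℤ) := fun u v h ↦ by simpa using h
  rw [heckeHalfSum, ← hinj.tsum_eq]
  · exact tsum_congr fun v ↦ if_pos ((hle _).2 (by lia))
  · intro l hl
    have hlp := (hle l).1 (of_not_not fun h ↦ hl (if_neg h))
    exact ⟨(p - l).toNat, by simp only; lia⟩

lemma tsum_heckeTerm_nat_add {τ : ℂ} (hτ : 0 < τ.im) (b : ℂ) (n : ℕ) (s p : ℤ) :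
    ∑' v : ℕ, heckeTerm τ b n s (p + 1 + v) = -∑' v : ℕ, heckeTerm τ b n s (p - v) := by
  have hs := (Equiv.addLeft (p + 1)).summable_iff.2 (summable_heckeTerm hτ b n s)
  have h := (Equiv.addLeft (p + 1)).tsum_eq (heckeTerm τ b n s)
  have hsplit := tsum_of_nat_of_neg_add_one (hs.comp_injective Nat.cast_injective)
    (hs.comp_injective (i := fun v : ℕ ↦ -((v : ℤ) + 1)) fun u v huv ↦ by simpa using huv)
  rw [tsum_heckeTerm] at h
  refine eq_neg_of_add_eq_zero_left (Eq.trans ?_ h)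
  refine Eq.trans ?_ hsplit.symm
  congr 1
  refine tsum_congr fun v ↦ ?_
  rw [Function.comp_apply, Equiv.coe_addLeft]
  ring_nf

lemma hasSum_tsum_heckeTerm_sub_nat {τ : ℂ} (hτ : 0 < τ.im) (b : ℂ) (n : ℕ) (c : ℤ) :
    HasSum (fun r : ℤ ↦ ∑' v : ℕ, heckeTerm τ b n ((2 * n + 1) * r + c) (r - 1 - v))
      (heckeNegQuadrant τ b n c - heckePosQuadrant τ b n c) := by
  have hneg := summable_heckeNegQuadrant hτ b n c
  have hpos := summable_heckePosQuadrant hτ b n c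
  rw [← (Equiv.neg ℤ).hasSum_iff, sub_eq_add_neg, heckeNegQuadrant, heckePosQuadrant,
    hneg.tsum_prod, hpos.tsum_prod]
  refine .of_nat_of_neg_add_one (hneg.prod.hasSum.congr_fun fun u ↦ tsum_congr fun v ↦ ?_)
    (hpos.prod.hasSum.neg.congr_fun fun u ↦ ?_)
  · rw [Equiv.neg_apply]
    ring_nf
  · rw [Function.comp_apply, Equiv.neg_apply, neg_neg]
    simp only [add_sub_cancel_right, add_right_comm _ _ (1 : ℤ), tsum_heckeTerm_nat_add hτ,
      neg_neg]

lemma heckeTerm_diag (τ b : ℂ) (n : ℕ) (κ r : ℤ) :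
    heckeTerm τ b n ((2 * n + 1) * r + κ) r = e2 (κ * b - τ * (κ ^ 2 / (2 * n + 1))) *
      ((-1) ^ (-r) * e2 ((-r : ℤ) * -((2 * n + 1) * b) +
        τ * ((2 * n + 2) * (-r : ℤ) ^ 2 + (2 * n + 1) * (-r : ℤ)))) := by
  have hN := two_mul_natCast_add_one_ne_zero n
  rw [heckeTerm, neg_one_zpow_neg, mul_left_comm, ← e2_add]
  congr 2
  push_cast
  field_simp
  ring

lemma hasSum_heckeHalfSum_residue {τ : ℂ} (hτ : 0 < τ.im) (b : ℂ) {n : ℕ} {κ : ℤ}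
    (hκ : 0 ≤ κ) (hκ' : κ < 2 * n + 1) :
    HasSum (fun r : ℤ ↦ heckeHalfSum τ b n ((2 * n + 1) * r + κ))
      (e2 (κ * b - τ * (κ ^ 2 / (2 * n + 1))) * signedTheta τ n (-((2 * n + 1) * b)) +
        (heckeNegQuadrant τ b n κ - heckePosQuadrant τ b n κ)) := by
  have hdiag := ((Equiv.neg ℤ).hasSum_iff.2 (summable_signedTheta hτ n
    (-((2 * n + 1) * b))).hasSum).mul_left (e2 (κ * b - τ * (κ ^ 2 / (2 * n + 1))))
  refine (hdiag.add (hasSum_tsum_heckeTerm_sub_nat hτ b n κ)).congr_fun fun r ↦ ?_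
  have hs := (summable_heckeTerm hτ b n ((2 * n + 1) * r + κ)).comp_injective
    (i := fun v : ℕ ↦ r - (v : ℤ)) fun u v huv ↦ by simpa using huv
  rw [heckeHalfSum_eq_tsum_nat τ b (p := r) (by lia) (by lia)]
  refine hs.tsum_eq_zero_add.trans ?_
  simp only [Function.comp_apply, Nat.cast_zero, sub_zero, heckeTerm_diag, Equiv.neg_apply,
    Nat.cast_add, Nat.cast_one, sub_add_eq_sub_sub_swap]

lemma hasSum_heckeHalfSum_neg_residue {τ : ℂ} (hτ : 0 < τ.im) (b : ℂ) {n : ℕ} {κ : ℤ}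
    (hκ : 0 < κ) (hκ' : κ ≤ 2 * n + 1) :
    HasSum (fun r : ℤ ↦ heckeHalfSum τ b n ((2 * n + 1) * r + (2 * n + 1 - κ)))
      (heckeNegQuadrant τ b n (-κ) - heckePosQuadrant τ b n (-κ)) := by
  refine ((Equiv.addRight (1 : ℤ)).hasSum_iff.2
    (hasSum_tsum_heckeTerm_sub_nat hτ b n (-κ))).congr_fun fun r ↦ ?_
  rw [heckeHalfSum_eq_tsum_nat τ b (p := r) (by lia) (by lia), Function.comp_apply,
    Equiv.coe_addRight, add_sub_cancel_right,
    show (2 * n + 1) * r + (2 * n + 1 - κ) = (2 * n + 1) * (r + 1) + -κ by ring]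

lemma tsum_eq_sum_tsum_residue (n : ℕ) {F : ℤ → ℂ} (hF : Summable F) :
    ∑' s, F s = ∑ k ∈ Finset.range (2 * n + 1), ∑' r : ℤ, F ((2 * n + 1) * r + k) := by
  let e := (Equiv.prodComm _ _).trans (Int.divModEquiv (2 * n + 1)).symm
  refine (e.tsum_eq F).symm.trans ((e.summable_iff.2 hF).tsum_prod.trans ?_)
  rw [tsum_fintype, Finset.sum_range]
  refine Finset.sum_congr rfl fun k _ ↦ tsum_congr fun r ↦ ?_
  simp only [Function.comp_apply, e, Equiv.trans_apply, Equiv.prodComm_apply, Prod.swap_prod_mk,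
    Int.divModEquiv_symm_apply]
  push_cast
  ring_nf

lemma sum_Icc_one_eq_sum_range {M : Type*} [AddCommMonoid M] (n : ℕ) (f : ℕ → M) :
    ∑ κ ∈ Finset.Icc 1 n, f κ = ∑ κ ∈ Finset.range n, f (κ + 1) := by
  rw [Finset.range_eq_Ico, Finset.sum_Ico_add' f 0 n 1]
  rfl

lemma sum_range_odd_eq_add_sum_pairs {M : Type*} [AddCommMonoid M] (n : ℕ) (g : ℕ → M) :
    ∑ k ∈ Finset.range (2 * n + 1), g k =
      g 0 + ∑ κ ∈ Finset.Icc 1 n, (g κ + g (2 * n + 1 - κ)) := by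
  rw [Finset.sum_range_succ', two_mul, Finset.sum_range_add, add_comm, sum_Icc_one_eq_sum_range,
    Finset.sum_add_distrib, ← Finset.sum_range_reflect fun κ ↦ g (n + κ + 1)]
  congr 2
  refine Finset.sum_congr rfl fun κ hκ ↦ congrArg g ?_
  have := Finset.mem_range.1 hκ
  lia

theorem signedTheta_mul_appellLerch_sub {τ a b : ℂ} (hτ : 0 < τ.im) (n : ℕ)
    (h : ∀ j : ℤ, 1 - e2 (a + b + 2 * j * τ) ≠ 0)
    (h' : ∀ j : ℤ, 1 - e2 (-a + b + 2 * j * τ) ≠ 0) :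
    signedTheta τ n (-((2 * n + 1) * b)) *
          (appellLerch τ n a (a + b) - appellLerch τ n (-a) (-a + b)) -
        (e2 ((n + 1) * (a + b)) * (signedTheta τ n ((2 * n + 2) * a + b) *
            ∑' k, appellTerm (e2 τ) (e2 (a + b)) k) -
          e2 ((n + 1) * (-a + b)) * (signedTheta τ n ((2 * n + 2) * -a + b) *
            ∑' k, appellTerm (e2 τ) (e2 (-a + b)) k)) =
      signedTheta τ n (-((2 * n + 1) * b)) *
          (∑ κ ∈ Finset.Icc 1 n, e2 (κ * b - τ * (κ ^ 2 / (2 * n + 1))) * oddCosetTheta τ a n κ) -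
        (∑ κ ∈ Finset.Icc 1 n,
          (heckePosQuadrant τ b n κ + heckeNegQuadrant τ b n (-κ)) * oddCosetTheta τ a n κ) +
        ∑ κ ∈ Finset.Icc 1 n,
          (heckePosQuadrant τ b n (-κ) + heckeNegQuadrant τ b n κ) * oddCosetTheta τ a n κ := by
  have hsum := hasSum_oddCosetTheta_mul_heckeHalfSum hτ n h h'
  rw [← hsum.tsum_eq, tsum_eq_sum_tsum_residue n hsum.summable, sum_range_odd_eq_add_sum_pairs,
    Finset.mul_sum, ← Finset.sum_sub_distrib, ← Finset.sum_add_distrib]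
  simp only [oddCosetTheta_add, tsum_mul_left, Nat.cast_zero, oddCosetTheta_zero, zero_mul,
    tsum_zero, zero_add]
  refine Finset.sum_congr rfl fun κ hκ ↦ ?_
  obtain ⟨hκ₁, hκ₂⟩ := Finset.mem_Icc.1 hκ
  have hcast : ((2 * n + 1 - κ : ℕ) : ℤ) = 2 * n + 1 - κ := by lia
  have hreflect : oddCosetTheta τ a n (2 * n + 1 - κ) = -oddCosetTheta τ a n κ := by
    rw [← oddCosetTheta_neg, ← oddCosetTheta_add τ a n 1 (-κ), mul_one, sub_eq_add_neg]
  rw [hcast, hreflect, (hasSum_heckeHalfSum_residue hτ b (by lia) (by lia)).tsum_eq,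
    (hasSum_heckeHalfSum_neg_residue hτ b (by lia) (by lia)).tsum_eq]
  push_cast
  ring

end TripleSeries

section ClassicalFunctions

lemma exp_eq_e2 {x z : ℂ} (h : x = 2 * Real.pi * I * z) : Complex.exp x = e2 z := by rw [e2, h]

lemma e2_half : e2 (1 / 2) = -1 := by
  rw [e2, ← Complex.exp_pi_mul_I]
  ring_nf

lemma e2_neg_quarter : e2 (-1 / 4) = -I := by
  rw [e2, ← Complex.exp_neg_pi_div_two_mul_I]
  ring_nf

lemma neg_one_zpow_eq_e2 (k : ℤ) : (-1 : ℂ) ^ k = e2 (k / 2) := by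
  rw [← e2_half, e2_zpow]
  ring_nf

lemma e2_eq_one_iff {z : ℂ} : e2 z = 1 ↔ ∃ k : ℤ, z = k := by
  rw [e2, Complex.exp_eq_one_iff]
  refine exists_congr fun k ↦ ?_
  rw [mul_comm, mul_left_inj' Complex.two_pi_I_ne_zero]

lemma one_sub_e2_ne_zero {τ w : ℂ} (h : ¬InLattice (2 * τ) w) (j : ℤ) :
    1 - e2 (w + 2 * j * τ) ≠ 0 := by
  intro h₀
  obtain ⟨k, hk⟩ := e2_eq_one_iff.1 (sub_eq_zero.1 h₀).symm
  refine h ⟨k, -j, ?_⟩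
  push_cast
  linear_combination hk

lemma InLattice.neg {τ w : ℂ} (h : InLattice τ w) : InLattice τ (-w) := by
  obtain ⟨a, b, rfl⟩ := h
  refine ⟨-a, -b, ?_⟩
  push_cast
  ring

lemma thetaTerm_e2 (τ w : ℂ) (k : ℤ) :
    thetaTerm (e2 τ) (e2 w) k = (-1) ^ k * e2 (τ * (k ^ 2 - k) + k * w) := by
  rw [thetaTerm, e2_zpow, e2_zpow, mul_assoc, ← e2_add]
  push_cast
  ring_nf

lemma summable_thetaTerm_e2 {τ : ℂ} (hτ : 0 < τ.im) (w : ℂ) :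
    Summable (thetaTerm (e2 τ) (e2 w)) := by
  simp only [funext (thetaTerm_e2 τ w)]
  refine summable_neg_one_zpow_mul <| (summable_e2_quadratic hτ (w - τ) 0).congr fun k ↦ ?_
  ring_nf

lemma norm_e2_lt_one {τ : ℂ} (hτ : 0 < τ.im) : ‖e2 τ‖ < 1 := by
  rw [norm_e2, Real.exp_lt_one_iff, neg_lt_zero]
  positivity

lemma eta_two_mul_pow_three (τ : ℂ) :
    eta (2 * τ) ^ 3 = e2 (τ / 4) * (∏' n : ℕ, (1 - (e2 τ ^ 2) ^ (n + 1))) ^ 3 := by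
  have hpow (n : ℕ) : qpow (2 * τ) (n + 1) = (e2 τ ^ 2) ^ (n + 1) := by
    rw [qpow_eq_e2, ← pow_mul, ← zpow_natCast, e2_zpow]
    push_cast
    ring_nf
  simp only [eta, hpow]
  rw [mul_pow, qpow_eq_e2, ← zpow_natCast, e2_zpow]
  push_cast
  ring_nf

lemma mumford_one_one_eq (τ w : ℂ) :
    mumford 1 1 (2 * τ) w = -I * e2 (τ / 4 - w / 2) * ∑' k, thetaTerm (e2 τ) (e2 w) k := by
  rw [mumford, ← (Equiv.subRight (1 : ℤ)).tsum_eq, ← tsum_mul_left]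
  refine tsum_congr fun k ↦ ?_
  rw [Equiv.subRight_apply, thetaTerm_e2, neg_one_zpow_eq_e2, ← e2_neg_quarter, ← e2_add,
    ← e2_add, ← e2_add]
  apply exp_eq_e2
  push_cast
  ring

lemma mumford_one_one_neg (τ w : ℂ) : mumford 1 1 τ (-w) = -mumford 1 1 τ w := by
  rw [mumford, mumford, ← (Equiv.subLeft (-1 : ℤ)).tsum_eq, ← tsum_neg]
  refine tsum_congr fun k ↦ ?_
  have hk : e2 (1 / 2 + (-k - 1 : ℤ)) = -1 := by
    rw [e2_add, e2_half, e2_eq_one_iff.2 ⟨_, rfl⟩, mul_one]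
  rw [Equiv.subLeft_apply, neg_eq_neg_one_mul (Complex.exp _), ← hk, e2, ← Complex.exp_add]
  push_cast
  ring_nf

lemma eta_pow_three_div_mumford {τ w : ℂ} (hτ : 0 < τ.im)
    (h : ∀ j : ℤ, 1 - e2 (w + 2 * j * τ) ≠ 0) :
    -I * eta (2 * τ) ^ 3 / mumford 1 1 (2 * τ) w =
      e2 (w / 2) * ∑' k, appellTerm (e2 τ) (e2 w) k := by
  have hnorm := norm_e2_lt_one hτ
  have hprod := tsum_thetaTerm_mul_tsum_appellTerm (e2_ne_zero τ) hnorm (e2_ne_zero w)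
    (fun j ↦ by rw [e2_mul_e2_sq_zpow]; exact h j) (summable_thetaTerm_e2 hτ w)
    (summable_appellTerm_e2 hτ w)
  have hne : (∏' n : ℕ, (1 - (e2 τ ^ 2) ^ (n + 1))) ^ 3 ≠ 0 := by
    refine pow_ne_zero 3 (tprod_one_sub_pow_ne_zero ?_)
    rw [norm_pow]
    exact pow_lt_one₀ (norm_nonneg _) hnorm two_ne_zero
  have hθ := left_ne_zero_of_mul (hprod ▸ hne)
  have he : e2 (τ / 4) = e2 (w / 2) * e2 (τ / 4 - w / 2) := by
    rw [← e2_add]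
    ring_nf
  have he₀ := e2_ne_zero (τ / 4 - w / 2)
  rw [eta_two_mul_pow_three, mumford_one_one_eq, ← hprod, he]
  generalize e2 (τ / 4 - w / 2) = y at he₀ ⊢
  field_simp [I_ne_zero]

lemma Phi_eq_appellLerch_sub (τ z₁ z₂ : ℂ) (n : ℕ) :
    Phi ((2 * n + 1) / 2) 0 (2 * τ) (2 * z₁) (2 * z₂) 0 =
      appellLerch τ n (z₁ + z₂) (2 * z₁) - appellLerch τ n (-(z₁ + z₂)) (-(2 * z₂)) := by
  rw [Phi, Phi1, Phi2, appellLerch, appellLerch]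
  simp only [mul_zero, Complex.exp_zero, one_mul, qpow_eq_e2, gaussTerm]
  congr 1 <;> refine tsum_congr fun j ↦ ?_
  · rw [exp_eq_e2 rfl, ← e2_add, ← e2_add]
    push_cast
    field_simp
    ring_nf
  · rw [exp_eq_e2 (z := -((2 * n + 1) * j * (z₁ + z₂))) (by ring), ← e2_add, ← e2_add]
    push_cast
    field_simp
    ring_nf

lemma jThetaM_neg (k m τ z : ℂ) : jThetaM (-k) m τ z = jThetaM k m τ (-z) := by
  rw [jThetaM, jThetaM, ← (Equiv.neg ℤ).tsum_eq]
  refine tsum_congr fun l ↦ ?_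
  rw [Equiv.neg_apply, neg_one_zpow_neg]
  push_cast
  ring_nf

lemma jThetaM_eq_signedTheta (τ z : ℂ) (n : ℕ) : jThetaM (2 * n + 1) (2 * n + 2) τ z =
    e2 ((2 * n + 1) / 2 * z + τ * ((2 * n + 1) ^ 2 / (4 * (2 * n + 2)))) *
      signedTheta τ n ((2 * n + 2) * z) := by
  have hM : (n + 1 : ℂ) ≠ 0 := n.cast_add_one_ne_zero
  rw [jThetaM, signedTheta, ← tsum_mul_left]
  refine tsum_congr fun l ↦ ?_
  rw [qpow_eq_e2, exp_eq_e2 rfl, mul_assoc, mul_left_comm (e2 _), ← e2_add, ← e2_add]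
  congr 2
  rw [show (2 * n + 2 : ℂ) = 2 * (n + 1) by ring]
  field_simp
  ring

lemma jTheta_eq_cosetTheta (τ a : ℂ) (n : ℕ) {k : ℂ} {s : ℤ} (hk : k = 2 * s) :
    jTheta k (2 * n + 1) τ a = cosetTheta τ a n s := by
  have hN := two_mul_natCast_add_one_ne_zero n
  rw [jTheta, cosetTheta]
  refine tsum_congr fun j ↦ ?_
  rw [qpow_eq_e2, exp_eq_e2 rfl, ← e2_add, gaussTerm, hk]
  push_cast
  field_simp

lemma jTheta_two_mul_two_mul (k m τ z : ℂ) :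
    jTheta k m (2 * τ) (2 * z) = jTheta (2 * k) (2 * m) τ z := by
  rw [jTheta, jTheta]
  refine tsum_congr fun j ↦ ?_
  rw [mul_div_mul_left _ _ two_ne_zero, qpow_eq_e2, qpow_eq_e2]
  ring_nf

end ClassicalFunctions

section CorrectionTerms

/-- The elementary factor, a fractional power of `e ^ 2πib` and of `q`, by which the identity
between the series `signedTheta`, `appellLerch`, `heckePosQuadrant` and `heckeNegQuadrant` differs
from the one between the classical functions. -/
def thetaPrefactor (τ b : ℂ) (n : ℕ) : ℂ :=
  e2 (-((2 * n + 1) ^ 2 * b / (2 * (2 * n + 2))) + τ * ((2 * n + 1) ^ 2 / (4 * (2 * n + 2))))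

lemma jThetaM_neg_eq_thetaPrefactor_mul (τ b : ℂ) (n : ℕ) :
    jThetaM (-(2 * n + 1)) (2 * n + 2) τ ((2 * n + 1) * b / (2 * n + 2)) =
      thetaPrefactor τ b n * signedTheta τ n (-((2 * n + 1) * b)) := by
  have hM := n.cast_add_one_ne_zero (R := ℂ)
  rw [jThetaM_neg, jThetaM_eq_signedTheta, thetaPrefactor,
    show (2 * n + 2 : ℂ) = 2 * (n + 1) by ring]
  field_simp

lemma eta_pow_three_mul_jThetaM_div_mumford {τ a b : ℂ} (hτ : 0 < τ.im) (n : ℕ)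
    (h : ∀ j : ℤ, 1 - e2 (a + b + 2 * j * τ) ≠ 0) :
    -I * eta (2 * τ) ^ 3 *
        (jThetaM (2 * n + 1) (2 * n + 2) τ (b / (2 * n + 2) + a) / mumford 1 1 (2 * τ) (a + b)) =
      thetaPrefactor τ b n * (e2 ((n + 1) * (a + b)) *
        (signedTheta τ n ((2 * n + 2) * a + b) * ∑' k, appellTerm (e2 τ) (e2 (a + b)) k)) := by
  have hM := n.cast_add_one_ne_zero (R := ℂ)
  have hfactor : e2 ((a + b) / 2) * e2 ((2 * n + 1) / 2 * (b / (2 * n + 2) + a) +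
        τ * ((2 * n + 1) ^ 2 / (4 * (2 * n + 2)))) =
      thetaPrefactor τ b n * e2 ((n + 1) * (a + b)) := by
    rw [thetaPrefactor, ← e2_add, ← e2_add, show (2 * n + 2 : ℂ) = 2 * (n + 1) by ring]
    congr 1
    field_simp
    ring
  have harg : (2 * n + 2 : ℂ) * (b / (2 * n + 2) + a) = (2 * n + 2) * a + b := by
    rw [show (2 * n + 2 : ℂ) = 2 * (n + 1) by ring]
    field_simp
    ring
  rw [mul_div_left_comm, eta_pow_three_div_mumford hτ h, jThetaM_eq_signedTheta, harg]
  linear_combination (signedTheta τ n ((2 * n + 2) * a + b) *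
    ∑' k, appellTerm (e2 τ) (e2 (a + b)) k) * hfactor

lemma sum_filter_even_range {M : Type*} [AddCommMonoid M] (n : ℕ) (f : ℕ → M) :
    ∑ k ∈ (Finset.range (2 * n + 1)).filter (fun k ↦ Even k), f k =
      ∑ κ ∈ Finset.range (n + 1), f (2 * κ) := by
  have himage : (Finset.range (2 * n + 1)).filter (fun k ↦ Even k) =
      (Finset.range (n + 1)).image (2 * ·) := by
    ext k
    simp only [Finset.mem_filter, Finset.mem_range, Finset.mem_image, even_iff_exists_two_mul]
    constructor
    · rintro ⟨hk, κ, rfl⟩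
      exact ⟨κ, by lia, rfl⟩
    · rintro ⟨κ, hκ, rfl⟩
      exact ⟨by lia, κ, rfl⟩
  rw [himage, Finset.sum_image fun _ _ _ _ h ↦ Nat.mul_left_cancel two_pos h]

lemma hasSum_heckeTerm_mul_oddCosetTheta {τ : ℂ} (hτ : 0 < τ.im) (a b : ℂ) (n : ℕ) (c : ℕ → ℤ) :
    HasSum (fun j : ℕ ↦ ∑ r ∈ Finset.range (j + 1), ∑ κ ∈ Finset.range (n + 1),
        (heckeTerm τ b n ((2 * n + 1) * (r + 1) + c κ) (j + 1) +
          heckeTerm τ b n (-((2 * n + 1) * r) + -c κ) (-(j + 1))) * oddCosetTheta τ a n κ)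
      (∑ κ ∈ Finset.Icc 1 n,
        (heckePosQuadrant τ b n (c κ) + heckeNegQuadrant τ b n (-c κ)) *
          oddCosetTheta τ a n κ) := by
  have h := hasSum_sum (s := Finset.range (n + 1)) fun κ _ ↦
    (hasSum_heckePosQuadrant_add_heckeNegQuadrant hτ b n (c κ)).mul_right (oddCosetTheta τ a n κ)
  rw [Finset.sum_range_succ', Nat.cast_zero, oddCosetTheta_zero, mul_zero, add_zero,
    ← sum_Icc_one_eq_sum_range n fun κ ↦ (heckePosQuadrant τ b n (c κ) +
      heckeNegQuadrant τ b n (-c κ)) * oddCosetTheta τ a n κ] at h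
  refine h.congr_fun fun j ↦ ?_
  rw [Finset.sum_comm]
  exact Finset.sum_congr rfl fun κ _ ↦ (Finset.sum_mul ..).symm

variable {m : ℂ} {n : ℕ} (hm : m = (2 * n + 1) / 2)
include hm

lemma jTheta_natCast_two_mul_sub (τ a : ℂ) (κ : ℕ) :
    jTheta ((2 * κ : ℕ) : ℂ) (2 * m) τ a - jTheta (-((2 * κ : ℕ) : ℂ)) (2 * m) τ a =
      oddCosetTheta τ a n κ := by
  rw [hm, mul_div_cancel₀ _ two_ne_zero, oddCosetTheta,
    jTheta_eq_cosetTheta (s := κ) τ a n (by push_cast; rfl),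
    jTheta_eq_cosetTheta (s := -κ) τ a n (by push_cast; ring)]

lemma sum_mul_jTheta_sub (τ a b : ℂ) :
    ∑ κ ∈ Finset.Icc 1 n, e2 (κ * b) * qpow τ (-κ ^ 2 / (2 * m)) *
        (jTheta κ m (2 * τ) (2 * a) - jTheta (-κ) m (2 * τ) (2 * a)) =
      ∑ κ ∈ Finset.Icc 1 n, e2 (κ * b - τ * (κ ^ 2 / (2 * n + 1))) * oddCosetTheta τ a n κ := by
  refine Finset.sum_congr rfl fun κ _ ↦ ?_
  rw [jTheta_two_mul_two_mul, jTheta_two_mul_two_mul, ← jTheta_natCast_two_mul_sub hm, qpow_eq_e2,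
    ← e2_add, hm, mul_div_cancel₀ _ two_ne_zero]
  push_cast
  ring_nf

/-- The summands of both triple series of the theorem, with `c = κ` in the first one (where `r` is
shifted by `1`) and `c = -κ` in the second one. -/
lemma mul_summand_eq_thetaPrefactor_mul (τ b : ℂ) (j r : ℕ) (c : ℤ) {X Y : ℂ}
    (hX : X = 4 * m * r + 2 * m + 2 * c) (hY : Y = 4 * m * (j - r) + 2 * m - 2 * c) :
    qpow τ (-m / (2 * (2 * m + 1))) * e2 (m * b / (2 * m + 1)) *
        ((-1) ^ (j + 1) * qpow τ ((2 * m + 1) * (j + 1) ^ 2 - Y ^ 2 / (8 * m)) *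
          (Complex.exp (Real.pi * I * X * b) * qpow τ (-X / 2) +
            Complex.exp (-(Real.pi * I) * X * b) * qpow τ (X / 2))) =
      thetaPrefactor τ b n * (heckeTerm τ b n ((2 * n + 1) * (r + 1) + c) (j + 1) +
        heckeTerm τ b n (-((2 * n + 1) * r) + -c) (-(j + 1))) := by
  have hN := two_mul_natCast_add_one_ne_zero n
  have hM := n.cast_add_one_ne_zero (R := ℂ)
  have hsign : (-1 : ℂ) ^ ((j : ℤ) + 1) = (-1) ^ (j + 1) := zpow_natCast _ (j + 1)
  rw [heckeTerm, heckeTerm, neg_one_zpow_neg, hsign, ← mul_add,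
    mul_left_comm (thetaPrefactor _ _ _), mul_assoc ((-1) ^ (j + 1)),
    mul_left_comm _ ((-1) ^ (j + 1)), thetaPrefactor,
    exp_eq_e2 (z := X * b / 2) (by ring), exp_eq_e2 (z := -(X * b / 2)) (by ring)]
  simp only [qpow_eq_e2, mul_add, ← e2_add, hX, hY, hm,
    show (2 * ((2 * n + 1) / 2) + 1 : ℂ) = 2 * (n + 1) by ring,
    show (2 * n + 2 : ℂ) = 2 * (n + 1) by ring]
  congr 3 <;> push_cast <;> field_simp <;> ring

lemma mul_tripleSeries_Icc_eq_thetaPrefactor_mul {τ : ℂ} (hτ : 0 < τ.im) (a b : ℂ) :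
    qpow τ (-m / (2 * (2 * m + 1))) * e2 (m * b / (2 * m + 1)) *
        ∑' j : ℕ, ∑ r ∈ Finset.Icc 1 (j + 1),
          ∑ k ∈ (Finset.range (2 * n + 1)).filter (fun k ↦ Even k),
            (-1 : ℂ) ^ (j + 1) *
              qpow τ ((2 * m + 1) * ((j : ℂ) + 1) ^ 2 -
                (4 * m * ((j : ℂ) + 1 - (r : ℂ)) + 2 * m - (k : ℂ)) ^ 2 / (8 * m)) *
              (Complex.exp (Real.pi * I * (4 * m * (r : ℂ) - 2 * m + (k : ℂ)) * b) *
                  qpow τ (-(4 * m * (r : ℂ) - 2 * m + (k : ℂ)) / 2) +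
                Complex.exp (-(Real.pi * I) * (4 * m * (r : ℂ) - 2 * m + (k : ℂ)) * b) *
                  qpow τ ((4 * m * (r : ℂ) - 2 * m + (k : ℂ)) / 2)) *
              (jTheta (k : ℂ) (2 * m) τ a - jTheta (-(k : ℂ)) (2 * m) τ a) =
      thetaPrefactor τ b n * ∑ κ ∈ Finset.Icc 1 n,
        (heckePosQuadrant τ b n κ + heckeNegQuadrant τ b n (-κ)) * oddCosetTheta τ a n κ := by
  rw [← (hasSum_heckeTerm_mul_oddCosetTheta hτ a b n fun κ ↦ κ).tsum_eq, ← tsum_mul_left,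
    ← tsum_mul_left]
  refine tsum_congr fun j ↦ ?_
  simp only [sum_Icc_one_eq_sum_range, sum_filter_even_range, Finset.mul_sum,
    jTheta_natCast_two_mul_sub hm, ← mul_assoc _ _ (oddCosetTheta τ a n _)]
  refine Finset.sum_congr rfl fun r _ ↦ Finset.sum_congr rfl fun κ _ ↦ congrArg (· * _) ?_
  refine mul_summand_eq_thetaPrefactor_mul hm τ b j r κ ?_ ?_ <;> push_cast <;> ring

lemma mul_tripleSeries_range_eq_thetaPrefactor_mul {τ : ℂ} (hτ : 0 < τ.im) (a b : ℂ) :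
    qpow τ (-m / (2 * (2 * m + 1))) * e2 (m * b / (2 * m + 1)) *
        ∑' j : ℕ, ∑ r ∈ Finset.range (j + 1),
          ∑ k ∈ (Finset.range (2 * n + 1)).filter (fun k ↦ Even k),
            (-1 : ℂ) ^ (j + 1) *
              qpow τ ((2 * m + 1) * ((j : ℂ) + 1) ^ 2 -
                (4 * m * ((j : ℂ) + 1 - (r : ℂ)) - 2 * m + (k : ℂ)) ^ 2 / (8 * m)) *
              (Complex.exp (Real.pi * I * (4 * m * (r : ℂ) + 2 * m - (k : ℂ)) * b) *
                  qpow τ (-(4 * m * (r : ℂ) + 2 * m - (k : ℂ)) / 2) +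
                Complex.exp (-(Real.pi * I) * (4 * m * (r : ℂ) + 2 * m - (k : ℂ)) * b) *
                  qpow τ ((4 * m * (r : ℂ) + 2 * m - (k : ℂ)) / 2)) *
              (jTheta (k : ℂ) (2 * m) τ a - jTheta (-(k : ℂ)) (2 * m) τ a) =
      thetaPrefactor τ b n * ∑ κ ∈ Finset.Icc 1 n,
        (heckePosQuadrant τ b n (-κ) + heckeNegQuadrant τ b n κ) * oddCosetTheta τ a n κ := by
  have hsum := hasSum_heckeTerm_mul_oddCosetTheta hτ a b n fun κ ↦ -κ
  simp only [neg_neg] at hsum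
  rw [← hsum.tsum_eq, ← tsum_mul_left, ← tsum_mul_left]
  refine tsum_congr fun j ↦ ?_
  simp only [sum_filter_even_range, Finset.mul_sum,
    jTheta_natCast_two_mul_sub hm, ← mul_assoc _ _ (oddCosetTheta τ a n _)]
  refine Finset.sum_congr rfl fun r _ ↦ Finset.sum_congr rfl fun κ _ ↦ congrArg (· * _) ?_
  rw [mul_summand_eq_thetaPrefactor_mul hm τ b j r (-κ) (by push_cast; ring) (by push_cast; ring),
    neg_neg]

end CorrectionTerms

theorem statement16 (m : ℝ) (n : ℕ) (hm : m = (2 * n + 1) / 2)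
    (τ : ℂ) (hτ : 0 < τ.im) (z1 z2 : ℂ)
    (h1 : ¬ InLattice (2 * τ) (2 * z1)) (h2 : ¬ InLattice (2 * τ) (2 * z2)) :
    jThetaM (-(2 * (m : ℂ))) (2 * (m : ℂ) + 1) τ
          (2 * (m : ℂ) * (z1 - z2) / (2 * (m : ℂ) + 1)) *
        Phi (m : ℂ) 0 (2 * τ) (2 * z1) (2 * z2) 0 =
      -Complex.I * eta (2 * τ) ^ 3 *
          (jThetaM (2 * (m : ℂ)) (2 * (m : ℂ) + 1) τ
              ((z1 - z2) / (2 * (m : ℂ) + 1) + z1 + z2) /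
              mumford 1 1 (2 * τ) (2 * z1) +
            jThetaM (2 * (m : ℂ)) (2 * (m : ℂ) + 1) τ
              ((z1 - z2) / (2 * (m : ℂ) + 1) - z1 - z2) /
              mumford 1 1 (2 * τ) (2 * z2)) -
        qpow τ (-(m : ℂ) / (2 * (2 * (m : ℂ) + 1))) *
          e2 ((m : ℂ) * (z1 - z2) / (2 * (m : ℂ) + 1)) *
          (∑' j : ℕ, ∑ r ∈ Finset.Icc 1 (j + 1),
            ∑ k ∈ (Finset.range (2 * n + 1)).filter (fun k => Even k),
              (-1 : ℂ) ^ (j + 1) *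
                qpow τ ((2 * (m : ℂ) + 1) * ((j : ℂ) + 1) ^ 2 -
                  (4 * (m : ℂ) * ((j : ℂ) + 1 - (r : ℂ)) + 2 * (m : ℂ) - (k : ℂ)) ^ 2 /
                    (8 * (m : ℂ))) *
                (Complex.exp (Real.pi * Complex.I *
                      (4 * (m : ℂ) * (r : ℂ) - 2 * (m : ℂ) + (k : ℂ)) * (z1 - z2)) *
                    qpow τ (-(4 * (m : ℂ) * (r : ℂ) - 2 * (m : ℂ) + (k : ℂ)) / 2) +
                  Complex.exp (-(Real.pi * Complex.I) *
                      (4 * (m : ℂ) * (r : ℂ) - 2 * (m : ℂ) + (k : ℂ)) * (z1 - z2)) *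
                    qpow τ ((4 * (m : ℂ) * (r : ℂ) - 2 * (m : ℂ) + (k : ℂ)) / 2)) *
                (jTheta (k : ℂ) (2 * (m : ℂ)) τ (z1 + z2) -
                  jTheta (-(k : ℂ)) (2 * (m : ℂ)) τ (z1 + z2))) +
        qpow τ (-(m : ℂ) / (2 * (2 * (m : ℂ) + 1))) *
          e2 ((m : ℂ) * (z1 - z2) / (2 * (m : ℂ) + 1)) *
          (∑' j : ℕ, ∑ r ∈ Finset.range (j + 1),
            ∑ k ∈ (Finset.range (2 * n + 1)).filter (fun k => Even k),
              (-1 : ℂ) ^ (j + 1) *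
                qpow τ ((2 * (m : ℂ) + 1) * ((j : ℂ) + 1) ^ 2 -
                  (4 * (m : ℂ) * ((j : ℂ) + 1 - (r : ℂ)) - 2 * (m : ℂ) + (k : ℂ)) ^ 2 /
                    (8 * (m : ℂ))) *
                (Complex.exp (Real.pi * Complex.I *
                      (4 * (m : ℂ) * (r : ℂ) + 2 * (m : ℂ) - (k : ℂ)) * (z1 - z2)) *
                    qpow τ (-(4 * (m : ℂ) * (r : ℂ) + 2 * (m : ℂ) - (k : ℂ)) / 2) +
                  Complex.exp (-(Real.pi * Complex.I) *
                      (4 * (m : ℂ) * (r : ℂ) + 2 * (m : ℂ) - (k : ℂ)) * (z1 - z2)) *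
                    qpow τ ((4 * (m : ℂ) * (r : ℂ) + 2 * (m : ℂ) - (k : ℂ)) / 2)) *
                (jTheta (k : ℂ) (2 * (m : ℂ)) τ (z1 + z2) -
                  jTheta (-(k : ℂ)) (2 * (m : ℂ)) τ (z1 + z2))) +
        jThetaM (-(2 * (m : ℂ))) (2 * (m : ℂ) + 1) τ
            (2 * (m : ℂ) * (z1 - z2) / (2 * (m : ℂ) + 1)) *
          ∑ k ∈ Finset.Icc 1 n,
            e2 ((k : ℂ) * (z1 - z2)) * qpow τ (-((k : ℂ) ^ 2) / (2 * (m : ℂ))) *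
              (jTheta (k : ℂ) (m : ℂ) (2 * τ) (2 * z1 + 2 * z2) -
                jTheta (-(k : ℂ)) (m : ℂ) (2 * τ) (2 * z1 + 2 * z2)) := by
  have hmC : (m : ℂ) = (2 * n + 1) / 2 := by rw [hm]; push_cast; rfl
  have hadd : z1 + z2 + (z1 - z2) = 2 * z1 := by ring
  have hsub : -(z1 + z2) + (z1 - z2) = -(2 * z2) := by ring
  have hz1 (j : ℤ) : 1 - e2 (z1 + z2 + (z1 - z2) + 2 * j * τ) ≠ 0 :=
    hadd ▸ one_sub_e2_ne_zero h1 j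
  have hz2 (j : ℤ) : 1 - e2 (-(z1 + z2) + (z1 - z2) + 2 * j * τ) ≠ 0 :=
    hsub ▸ one_sub_e2_ne_zero (fun h ↦ h2 (neg_neg (2 * z2) ▸ h.neg)) j
  have hmain := signedTheta_mul_appellLerch_sub hτ n hz1 hz2
  have hη₁ := eta_pow_three_mul_jThetaM_div_mumford hτ n hz1
  have hη₂ := eta_pow_three_mul_jThetaM_div_mumford hτ n hz2
  rw [hadd] at hmain hη₁
  rw [hsub] at hmain hη₂
  rw [mumford_one_one_neg, div_neg] at hη₂
  rw [mul_tripleSeries_Icc_eq_thetaPrefactor_mul hmC hτ,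
    mul_tripleSeries_range_eq_thetaPrefactor_mul hmC hτ, ← mul_add 2 z1 z2,
    sum_mul_jTheta_sub hmC, hmC, mul_div_cancel₀ _ two_ne_zero, Phi_eq_appellLerch_sub,
    show (2 * n + 1 + 1 : ℂ) = 2 * n + 2 by ring, jThetaM_neg_eq_thetaPrefactor_mul,
    add_assoc _ z1, sub_sub _ z1, sub_eq_add_neg _ (z1 + z2)]
  linear_combination thetaPrefactor τ (z1 - z2) n * hmain - hη₁ + hη₂

end Wakimoto
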